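/- Let n ≥ 4 be a natural number. The genus-zero Hurwitz number h_{1^2} with one degenerate branch point of reduced ramification type 1^2 (i.e., one permutation of cycle type (2,2,1^{n-4})) and m = 2n−4 simple branch points satisfies h_{1^2} = 2·((2n−4)!/(n−4)!)·n^{n−5}. -/

import Mathlib

open Equiv

/-!
A tuple `(σ, τ₁, …, τ_m)` as in the theorem is a factorization of `σ⁻¹` into transpositions that
generate a transitive group. So it suffices to count, for a permutation `σ` and an equivalence
relation `s`, the factorizations of `σ` into `k` transpositions generating a group with orbit
relation `s`, where `k` is as small as possible. Removing the first factor `swap x y` gives the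
cut-and-join recursion: either `x` and `y` lie in different cycles of `σ`, which `swap x y` joins,
or they lie in the same cycle, which is cut; in the second case minimality forces the block of `s`
containing `x` and `y` to split in two as well.

Hurwitz' closed form is `k!` times a factor `a ^ (a + 1) / a!` for every cycle of length `a` and a
factor `N ^ (m - 3)` for every block of `s` with `N` points and `m` cycles. That it satisfies the
same recursion comes down to one identity per block. There the sum over all ways to split the block
is evaluated by Abel's and Hurwitz' generalizations of the binomial theorem, and the remaining sum
over the two lengths of a cut cycle by convolution identities for the numbers `a ^ a / a!`.
-/

namespace HurwitzFormula

section AbelIdentities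

open Finset Polynomial

variable {ι : Type*}

theorem sum_powerset_neg_one_pow_mul_eval_eq_zero {A : Type*} [CommRing A] (z : ι → A)
    (R : Finset ι) (q : A[X]) (x : A) (hq : q.degree < #R) :
    ∑ S ∈ R.powerset, (-1) ^ #S * q.eval (x + ∑ i ∈ S, z i) = 0 := by
  classical
  induction R using Finset.induction_on generalizing q with
  | empty =>
    have hq0 : q = 0 := by simpa [Nat.WithBot.lt_zero_iff] using hq
    simp [hq0]
  | insert j R hj ih =>
    have hdiff : (q - taylor (z j) q).degree < #R := by
      rcases eq_or_ne q 0 with rfl | hq0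
      · simp
      · have hlt := degree_sub_lt_left (degree_taylor q (z j)).symm hq0
          (leadingCoeff_taylor (z j) q).symm
        rw [card_insert_of_notMem hj] at hq
        rw [degree_eq_natDegree hq0] at hlt hq
        refine hlt.trans_le ?_
        norm_cast at hq ⊢
        lia
    rw [sum_powerset_insert hj, ← ih _ hdiff, ← sum_add_distrib]
    refine sum_congr rfl fun S hS ↦ ?_
    have hjS : j ∉ S := notMem_mono (mem_powerset.1 hS) hj
    rw [card_insert_of_notMem hjS, sum_insert hjS, eval_sub, taylor_eval, pow_succ,
      add_left_comm x, add_comm (z j)]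
    ring

variable [DecidableEq ι]

theorem sum_powerset_sum_sdiff {M : Type*} [AddCommMonoid M] (R : Finset ι)
    (f : Finset ι → ι → M) :
    ∑ S ∈ R.powerset, ∑ j ∈ R \ S, f S j = ∑ j ∈ R, ∑ S ∈ (R.erase j).powerset, f S j := by
  refine sum_comm' fun S j ↦ ?_
  simp only [mem_powerset, mem_sdiff, subset_erase]
  tauto

theorem eq_of_derivative_eq_of_eval_eq {A : Type*} [CommRing A] [IsAddTorsionFree A]
    {p q : A[X]} (hder : derivative p = derivative q) {a : A} (ha : p.eval a = q.eval a) :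
    p = q := by
  have hconst := eq_C_of_derivative_eq_zero (p := p - q) (by rw [derivative_sub, hder, sub_self])
  have hzero : (p - q).coeff 0 = 0 := by
    rw [← eval_C (x := a) (a := (p - q).coeff 0), ← hconst, eval_sub, ha, sub_self]
  rw [hzero, C_0] at hconst
  exact sub_eq_zero.1 hconst

variable {K : Type*} [Field K]

/-- The sum over the subsets `S` of `R` of
`(x + ∑ S, z) ^ (#S - i) * (y + ∑ R \ S, z) ^ (#(R \ S) - j)`, where the possibly negative exponents
are encoded by a division. Hurwitz's generalizations of Abel's binomial theorem evaluate it for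
small `i` and `j`. -/
def hurwitzSum (z : ι → K) (i j : ℕ) (R : Finset ι) (x y : K) : K :=
  ∑ S ∈ R.powerset, (x + ∑ k ∈ S, z k) ^ #S / (x + ∑ k ∈ S, z k) ^ i *
    ((y + ∑ k ∈ R \ S, z k) ^ #(R \ S) / (y + ∑ k ∈ R \ S, z k) ^ j)

theorem hurwitzSum_comm (z : ι → K) (i j : ℕ) (R : Finset ι) (x y : K) :
    hurwitzSum z i j R x y = hurwitzSum z j i R y x := by
  refine sum_nbij' (R \ ·) (R \ ·) ?_ ?_ ?_ ?_ ?_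
  · simp
  · simp
  · simp +contextual
  · simp +contextual
  · intro S hS
    rw [Finset.sdiff_sdiff_eq_self (mem_powerset.1 hS), mul_comm]

theorem hurwitzSum_eq_mul_add_sum (z : ι → K) (i j : ℕ) {R : Finset ι} (x : K) {y : K}
    (hy : ∀ T ⊆ R, y + ∑ k ∈ T, z k ≠ 0) :
    hurwitzSum z i j R x y = y * hurwitzSum z i (j + 1) R x y +
      ∑ k ∈ R, z k * hurwitzSum z i j (R.erase k) x (y + z k) := by
  simp only [hurwitzSum, mul_sum]
  rw [← sum_powerset_sum_sdiff R, ← sum_add_distrib]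
  refine sum_congr rfl fun S _ ↦ ?_
  set s := (x + ∑ k ∈ S, z k) ^ #S / (x + ∑ k ∈ S, z k) ^ i
  set T := R \ S with hT
  have hT0 := hy T sdiff_subset
  have herase : ∀ k ∈ T, z k * (s * ((y + z k + ∑ l ∈ R.erase k \ S, z l) ^ #(R.erase k \ S) /
      (y + z k + ∑ l ∈ R.erase k \ S, z l) ^ j)) =
      z k * (s * ((y + ∑ l ∈ T, z l) ^ #T / (y + ∑ l ∈ T, z l) ^ (j + 1))) := by
    intro k hk
    obtain ⟨m, hm⟩ := Nat.exists_eq_add_one.2 (card_pos.2 ⟨k, hk⟩)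
    rw [erase_sdiff_comm, ← hT, card_erase_of_mem hk, add_assoc, add_sum_erase _ _ hk, hm,
      add_tsub_cancel_right, pow_succ, pow_succ, mul_div_mul_right _ _ hT0]
  rw [sum_congr rfl herase, ← sum_mul, pow_succ]
  field_simp

theorem mul_hurwitzSum_two_two (z : ι → K) {R : Finset ι} {x y : K}
    (hx : ∀ S ⊆ R, x + ∑ k ∈ S, z k ≠ 0) (hy : ∀ S ⊆ R, y + ∑ k ∈ S, z k ≠ 0) :
    (x + y + ∑ k ∈ R, z k) * hurwitzSum z 2 2 R x y =
      hurwitzSum z 1 2 R x y + hurwitzSum z 1 2 R y x := by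
  rw [hurwitzSum_comm z 1 2 R y x]
  simp only [hurwitzSum]
  rw [mul_sum, ← sum_add_distrib]
  refine sum_congr rfl fun S hS ↦ ?_
  have hxS := hx S (mem_powerset.1 hS)
  have hyS := hy (R \ S) sdiff_subset
  rw [← sum_sdiff (mem_powerset.1 hS)]
  field_simp
  ring

theorem exists_polynomial_hurwitzSum (z : ι → K) (i : ℕ) (R : Finset ι) (x : K) :
    ∃ p : K[X], (∀ y, p.eval y = hurwitzSum z i 0 R x y) ∧
      ∀ y, (derivative p).eval y = ∑ j ∈ R, hurwitzSum z i 0 (R.erase j) x (y + z j) := by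
  refine ⟨∑ S ∈ R.powerset, C ((x + ∑ k ∈ S, z k) ^ #S / (x + ∑ k ∈ S, z k) ^ i) *
    (X + C (∑ k ∈ R \ S, z k)) ^ #(R \ S), fun y ↦ ?_, fun y ↦ ?_⟩
  · simp only [hurwitzSum, eval_finsetSum, eval_mul, eval_C, eval_pow, eval_add, eval_X, pow_zero,
      div_one]
  · simp only [hurwitzSum, derivative_sum, eval_finsetSum]
    rw [← sum_powerset_sum_sdiff R]
    refine sum_congr rfl fun S _ ↦ ?_
    set s := (x + ∑ k ∈ S, z k) ^ #S / (x + ∑ k ∈ S, z k) ^ i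
    have herase : ∀ j ∈ R \ S, s * ((y + z j + ∑ k ∈ R.erase j \ S, z k) ^ #(R.erase j \ S) /
        (y + z j + ∑ k ∈ R.erase j \ S, z k) ^ 0) =
        s * (y + ∑ k ∈ R \ S, z k) ^ (#(R \ S) - 1) := fun j hj ↦ by
      rw [erase_sdiff_comm, card_erase_of_mem hj, add_assoc y, add_sum_erase _ _ hj, pow_zero,
        div_one]
    rw [sum_congr rfl herase, sum_const, nsmul_eq_mul]
    simp only [derivative_C_mul, derivative_X_add_C_pow, eval_mul, eval_C, eval_pow, eval_add,
      eval_X]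
    ring

/-- At `y = -(x + ∑ R, z)` the sum is a finite difference of a polynomial of degree `#R - 1`. -/
theorem hurwitzSum_one_zero_neg (z : ι → K) {R : Finset ι} (hR : R.Nonempty) {x : K}
    (hx : ∀ S ⊆ R, x + ∑ k ∈ S, z k ≠ 0) :
    hurwitzSum z 1 0 R x (-(x + ∑ k ∈ R, z k)) = 0 := by
  have hdeg : (X ^ (#R - 1) : K[X]).degree < #R := by
    rw [degree_X_pow]
    exact_mod_cast Nat.sub_one_lt hR.card_ne_zero
  rw [← mul_zero ((-1 : K) ^ #R),
    ← sum_powerset_neg_one_pow_mul_eval_eq_zero z R (X ^ (#R - 1)) x hdeg, mul_sum, hurwitzSum]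
  refine sum_congr rfl fun S hS ↦ ?_
  rw [mem_powerset] at hS
  have hxS := hx S hS
  have hbase : -(x + ∑ k ∈ R, z k) + ∑ k ∈ R \ S, z k = -1 * (x + ∑ k ∈ S, z k) := by
    rw [← sum_sdiff hS]
    ring
  obtain ⟨r, hr⟩ := Nat.exists_eq_add_one.2 hR.card_pos
  have hsign : ((-1 : K) ^ #S) * (-1) ^ #S = 1 := by rw [← mul_pow]; simp
  have hcard : #(R \ S) + #S = r + 1 := hr ▸ card_sdiff_add_card_eq_card hS
  have hpow : (x + ∑ k ∈ S, z k) ^ #S * (x + ∑ k ∈ S, z k) ^ #(R \ S) =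
      (x + ∑ k ∈ S, z k) ^ r * (x + ∑ k ∈ S, z k) := by
    rw [← pow_add, ← pow_succ, add_comm #S, hcard]
  rw [hbase, mul_pow, hr, ← hcard, pow_add, eval_pow, eval_X, hcard, add_tsub_cancel_right,
    pow_one, pow_zero, div_one]
  field_simp
  linear_combination hpow -
    (x + ∑ k ∈ S, z k) ^ r * (x + ∑ k ∈ S, z k) * hsign

section CharZero

variable [CharZero K]

theorem hurwitzSum_one_zero (z : ι → K) {R : Finset ι} {x : K}
    (hx : ∀ S ⊆ R, x + ∑ k ∈ S, z k ≠ 0) (y : K) :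
    hurwitzSum z 1 0 R x y = (x + y + ∑ k ∈ R, z k) ^ #R / x := by
  induction hr : #R generalizing R y with
  | zero =>
    obtain rfl := card_eq_zero.1 hr
    simp [hurwitzSum]
  | succ r ih =>
    obtain ⟨p, hp, hder_p⟩ := exists_polynomial_hurwitzSum z 1 R x
    let q : K[X] := C x⁻¹ * (X + C (x + ∑ k ∈ R, z k)) ^ (r + 1)
    have hq (y) : q.eval y = (x + y + ∑ k ∈ R, z k) ^ (r + 1) / x := by
      simp only [q, eval_mul, eval_C, eval_pow, eval_add, eval_X]
      ring
    have hder : derivative p = derivative q := by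
      refine Polynomial.funext fun y ↦ ?_
      have hih : ∀ j ∈ R, hurwitzSum z 1 0 (R.erase j) x (y + z j) =
          (x + y + ∑ k ∈ R, z k) ^ r / x := fun j hj ↦ by
        rw [ih (fun S hS ↦ hx S (hS.trans (erase_subset j R))) (y + z j)
          (by rw [card_erase_of_mem hj, hr, add_tsub_cancel_right]), ← add_assoc,
          add_assoc (x + y), add_sum_erase _ _ hj]
      rw [hder_p, sum_congr rfl hih, sum_const, nsmul_eq_mul, hr]
      simp only [q, derivative_C_mul, derivative_X_add_C_pow, eval_mul, eval_C, eval_pow, eval_add,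
        eval_X, add_tsub_cancel_right]
      ring
    have hend : p.eval (-(x + ∑ k ∈ R, z k)) = q.eval (-(x + ∑ k ∈ R, z k)) := by
      rw [hp, hq, hurwitzSum_one_zero_neg z (card_pos.1 (by lia)) hx]
      simp
    rw [← hp, ← hq, eq_of_derivative_eq_of_eval_eq hder hend]

theorem hurwitzSum_one_one (z : ι → K) {R : Finset ι} {x y : K}
    (hx : ∀ S ⊆ R, x + ∑ k ∈ S, z k ≠ 0) (hy : ∀ S ⊆ R, y + ∑ k ∈ S, z k ≠ 0)
    (hxy : x + y + ∑ k ∈ R, z k ≠ 0) :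
    hurwitzSum z 1 1 R x y =
      (x + y) / (x * y) * ((x + y + ∑ k ∈ R, z k) ^ #R / (x + y + ∑ k ∈ R, z k)) := by
  have hx0 : x ≠ 0 := by simpa using hx ∅ (empty_subset R)
  have hy0 : y ≠ 0 := by simpa using hy ∅ (empty_subset R)
  have herase : ∀ k ∈ R, z k * hurwitzSum z 1 0 (R.erase k) x (y + z k) =
      z k * ((x + y + ∑ k ∈ R, z k) ^ #R / (x + y + ∑ k ∈ R, z k) / x) := fun k hk ↦ by
    rw [hurwitzSum_one_zero z (fun S hS ↦ hx S (hS.trans (erase_subset k R))), ← add_assoc,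
      add_assoc (x + y), add_sum_erase _ _ hk, ← card_erase_add_one hk, pow_succ,
      mul_div_cancel_right₀ _ hxy]
  have hrec := hurwitzSum_eq_mul_add_sum z 1 0 x hy
  rw [hurwitzSum_one_zero z hx, sum_congr rfl herase, ← sum_mul] at hrec
  field_simp at hrec ⊢
  linear_combination -hrec

theorem hurwitzSum_one_two (z : ι → K) {R : Finset ι} {x y : K}
    (hx : ∀ S ⊆ R, x + ∑ k ∈ S, z k ≠ 0) (hy : ∀ S ⊆ R, y + ∑ k ∈ S, z k ≠ 0)
    (hxy : x + y + ∑ k ∈ R, z k ≠ 0) :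
    hurwitzSum z 1 2 R x y =
      1 / y * ((x + y) / (x * y) * ((x + y + ∑ k ∈ R, z k) ^ #R / (x + y + ∑ k ∈ R, z k)) -
        (∑ k ∈ R, z k * ((x + y + z k) / (x * (y + z k)))) *
          ((x + y + ∑ k ∈ R, z k) ^ #R / (x + y + ∑ k ∈ R, z k) ^ 2)) := by
  have hy0 : y ≠ 0 := by simpa using hy ∅ (empty_subset R)
  have herase : ∀ k ∈ R, z k * hurwitzSum z 1 1 (R.erase k) x (y + z k) =
      z k * ((x + y + z k) / (x * (y + z k))) *
        ((x + y + ∑ k ∈ R, z k) ^ #R / (x + y + ∑ k ∈ R, z k) ^ 2) := fun k hk ↦ by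
    have hsum : x + (y + z k) + ∑ l ∈ R.erase k, z l = x + y + ∑ l ∈ R, z l := by
      rw [← add_sum_erase _ _ hk]
      ring
    have hy' : ∀ S ⊆ R.erase k, y + z k + ∑ l ∈ S, z l ≠ 0 := fun S hS ↦ by
      rw [add_assoc, ← sum_insert fun hkS ↦ notMem_erase k R (hS hkS)]
      exact hy _ (insert_subset hk (hS.trans (erase_subset k R)))
    rw [hurwitzSum_one_one z (fun S hS ↦ hx S (hS.trans (erase_subset k R))) hy' (hsum ▸ hxy),
      hsum, ← card_erase_add_one hk, ← add_assoc, pow_succ, sq, mul_div_mul_right _ _ hxy]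
    ring
  rw [sum_mul, ← sum_congr rfl herase, ← hurwitzSum_one_one z hx hy hxy,
    hurwitzSum_eq_mul_add_sum z 1 1 x hy]
  field_simp
  ring

end CharZero

end AbelIdentities

section SelfMapCoefficients

open Finset Polynomial
open scoped Nat

theorem sum_antidiagonal_sum_antidiagonal {M : Type*} [AddCommMonoid M] (n : ℕ)
    (f : ℕ → ℕ → ℕ → M) :
    ∑ p ∈ antidiagonal n, ∑ q ∈ antidiagonal p.1, f q.1 q.2 p.2 =
      ∑ p ∈ antidiagonal n, ∑ q ∈ antidiagonal p.2, f p.1 q.1 q.2 := by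
  simp only [sum_sigma']
  refine sum_nbij' (fun ⟨p, q⟩ ↦ ⟨(q.1, q.2 + p.2), (q.2, p.2)⟩)
    (fun ⟨p, q⟩ ↦ ⟨(p.1 + q.1, q.2), (p.1, q.1)⟩) ?_ ?_ ?_ ?_ ?_
  · simp only [mem_sigma, HasAntidiagonal.mem_antidiagonal]
    lia
  · simp only [mem_sigma, HasAntidiagonal.mem_antidiagonal]
    lia
  · rintro ⟨⟨p₁, p₂⟩, q₁, q₂⟩ h
    simp only [mem_sigma, HasAntidiagonal.mem_antidiagonal] at h
    simp only [h.2]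
  · rintro ⟨⟨p₁, p₂⟩, q₁, q₂⟩ h
    simp only [mem_sigma, HasAntidiagonal.mem_antidiagonal] at h
    simp only [h.2]
  · simp

theorem sum_antidiagonal_eq_add_sum_Ico {M : Type*} [AddCommMonoid M] {n : ℕ} (hn : 0 < n)
    (f : ℕ → ℕ → M) :
    ∑ p ∈ antidiagonal n, f p.1 p.2 = f 0 n + ∑ b ∈ Ico 1 n, f b (n - b) + f n 0 := by
  rw [Nat.sum_antidiagonal_eq_sum_range_succ, sum_range_succ, sum_range_eq_add_Ico _ hn, tsub_zero,
    tsub_self]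

theorem add_pow_div_factorial {K : Type*} [Field K] [CharZero K] (x y : K) (n : ℕ) :
    (x + y) ^ n / n ! = ∑ p ∈ antidiagonal n, x ^ p.1 / p.1 ! * (y ^ p.2 / p.2 !) := by
  rw [Nat.sum_antidiagonal_eq_sum_range_succ (fun i j ↦ x ^ i / i ! * (y ^ j / j !)), add_pow,
    sum_div]
  refine sum_congr rfl fun i hi ↦ ?_
  have hn : (n ! : K) ≠ 0 := mod_cast n.factorial_ne_zero
  rw [Nat.cast_choose K (mem_range_succ_iff.1 hi)]
  field_simp

/-- The number `k ^ k` of self-maps of a set with `k` elements, divided by `k !`. -/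
def selfMapCoeff (k : ℕ) : ℚ := k ^ k / k !

@[simp]
theorem selfMapCoeff_zero : selfMapCoeff 0 = 1 := by simp [selfMapCoeff]

theorem selfMapCoeff_ne_zero (k : ℕ) : selfMapCoeff k ≠ 0 := by
  rcases Nat.eq_zero_or_pos k with rfl | hk
  · simp
  · have := Nat.factorial_ne_zero k
    unfold selfMapCoeff
    positivity

theorem sum_antidiagonal_mul_selfMapCoeff (m : ℕ) {x : ℚ} (hx : 0 < x) :
    ∑ p ∈ antidiagonal m, (x + p.1) ^ p.1 / (x + p.1) / p.1 ! * selfMapCoeff p.2 =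
      (x + m) ^ m / x / m ! := by
  have habel := hurwitzSum_one_zero (fun _ : ℕ ↦ (1 : ℚ)) (R := range m) (x := x)
    (fun S _ ↦ by simp only [sum_const, nsmul_eq_mul, mul_one]; positivity) 0
  have hterm : ∀ S ∈ (range m).powerset,
      (x + ∑ _k ∈ S, (1 : ℚ)) ^ #S / (x + ∑ _k ∈ S, (1 : ℚ)) ^ 1 *
        ((0 + ∑ _k ∈ range m \ S, (1 : ℚ)) ^ #(range m \ S) /
          (0 + ∑ _k ∈ range m \ S, (1 : ℚ)) ^ 0) =
      (fun i ↦ (x + i) ^ i / (x + i) * ((m - i : ℕ) : ℚ) ^ (m - i)) #S := fun S hS ↦ by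
    simp [card_sdiff_of_subset (mem_powerset.1 hS)]
  rw [hurwitzSum, sum_congr rfl hterm, sum_powerset_apply_card
    fun i ↦ (x + i) ^ i / (x + i) * ((m - i : ℕ) : ℚ) ^ (m - i), card_range, add_zero, sum_const,
    card_range, nsmul_one] at habel
  rw [← habel, sum_div, Nat.sum_antidiagonal_eq_sum_range_succ
    (fun i j ↦ (x + i) ^ i / (x + i) / i ! * selfMapCoeff j)]
  refine sum_congr rfl fun i hi ↦ ?_
  rw [selfMapCoeff, nsmul_eq_mul, Nat.cast_choose ℚ (mem_range_succ_iff.1 hi)]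
  field_simp

theorem sum_Ico_selfMapCoeff_div {k : ℕ} (hk : 0 < k) :
    ∑ b ∈ Ico 1 k, selfMapCoeff b * selfMapCoeff (k - b) / b = selfMapCoeff k * (1 - 1 / k) := by
  obtain ⟨m, rfl⟩ := Nat.exists_eq_add_one.2 hk
  have habel := sum_antidiagonal_mul_selfMapCoeff m one_pos
  have hterm (i : ℕ) : (1 + i : ℚ) ^ i / (1 + i) / i ! = selfMapCoeff (i + 1) / (i + 1 : ℕ) := by
    rw [selfMapCoeff, Nat.factorial_succ]
    push_cast
    field_simp
    ring
  have hsum : selfMapCoeff (m + 1) = (1 + m : ℚ) ^ m / 1 / m ! := by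
    rw [selfMapCoeff, Nat.factorial_succ]
    push_cast
    field_simp
    ring
  simp only [hterm] at habel
  rw [← hsum, Nat.sum_antidiagonal_eq_sum_range_succ
    (fun i j ↦ selfMapCoeff (i + 1) / (i + 1 : ℕ) * selfMapCoeff j), sum_range_succ, tsub_self,
    selfMapCoeff_zero] at habel
  rw [sum_Ico_eq_sum_range, add_tsub_cancel_right]
  have hreindex : ∀ i ∈ range m,
      selfMapCoeff (1 + i) * selfMapCoeff (m + 1 - (1 + i)) / (1 + i : ℕ) =
        selfMapCoeff (i + 1) / (i + 1 : ℕ) * selfMapCoeff (m - i) := fun i _ ↦ by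
    rw [add_comm 1 i, Nat.add_sub_add_right]
    ring
  rw [sum_congr rfl hreindex]
  linear_combination habel

/-- Expanding `i ^ i = (-l + (l + i)) ^ i` makes the inner sum an Abel sum. -/
theorem sum_antidiagonal_selfMapCoeff_div {l : ℕ} (hl : 0 < l) (k : ℕ) :
    ∑ p ∈ antidiagonal k, selfMapCoeff p.1 * selfMapCoeff p.2 / (l + p.1) =
      ∑ p ∈ antidiagonal k, (-l : ℚ) ^ p.1 / p.1 ! / (l + p.1) * ((l + k) ^ p.2 / p.2 !) := by
  have hexpand (i : ℕ) : selfMapCoeff i =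
      ∑ q ∈ antidiagonal i, (-l : ℚ) ^ q.1 / q.1 ! * ((l + i) ^ q.2 / q.2 !) := by
    rw [← add_pow_div_factorial, neg_add_cancel_left, selfMapCoeff]
  calc
    _ = ∑ p ∈ antidiagonal k, ∑ q ∈ antidiagonal p.1, (-l : ℚ) ^ q.1 / q.1 ! *
          ((l + q.1 + q.2) ^ q.2 / (l + q.1 + q.2) / q.2 ! * selfMapCoeff p.2) := by
      refine sum_congr rfl fun p _ ↦ ?_
      rw [hexpand p.1, sum_mul, sum_div]
      refine sum_congr rfl fun q hq ↦ ?_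
      rw [← mem_antidiagonal.1 hq, Nat.cast_add, ← add_assoc (l : ℚ)]
      field_simp
    _ = ∑ p ∈ antidiagonal k, (-l : ℚ) ^ p.1 / p.1 ! *
          ((l + p.1 + p.2) ^ p.2 / (l + p.1) / p.2 !) := by
      rw [sum_antidiagonal_sum_antidiagonal k fun i j m ↦ (-l : ℚ) ^ i / i ! *
        ((l + i + j) ^ j / (l + i + j) / j ! * selfMapCoeff m)]
      refine sum_congr rfl fun p _ ↦ ?_
      rw [← mul_sum, sum_antidiagonal_mul_selfMapCoeff p.2 (by positivity)]
    _ = _ := by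
      refine sum_congr rfl fun p hp ↦ ?_
      rw [← mem_antidiagonal.1 hp, Nat.cast_add, ← add_assoc (l : ℚ)]
      field_simp

/-- Both sides are antiderivatives of `l * (k + l).choose l * X ^ (l - 1) * (1 - X) ^ k`. -/
theorem sum_Ico_bernsteinPolynomial {l : ℕ} (hl : 0 < l) (k : ℕ) :
    ∑ ν ∈ Ico l (k + l + 1), bernsteinPolynomial ℚ (k + l) ν =
      C (l * (k + l).choose l : ℚ) *
        ∑ i ∈ range (k + 1), C ((-1) ^ i * k.choose i / (l + i) : ℚ) * X ^ (l + i) := by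
  obtain ⟨m, rfl⟩ := Nat.exists_eq_add_one.2 hl
  refine eq_of_derivative_eq_of_eval_eq (a := 0) ?_ ?_
  · have hleft : derivative (∑ ν ∈ Ico (m + 1) (k + (m + 1) + 1),
        bernsteinPolynomial ℚ (k + (m + 1)) ν) =
        ((k + (m + 1) : ℕ) : ℚ[X]) * bernsteinPolynomial ℚ (k + m) m := by
      rw [sum_Ico_eq_sum_range, derivative_sum]
      simp only [add_right_comm m 1, bernsteinPolynomial.derivative_succ, ← mul_sum]
      simp only [add_assoc m]
      rw [show k + (m + 1) + 1 - (m + 1) = k + 1 by lia, show k + (m + 1) - 1 = k + m by lia,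
        sum_range_sub' (fun i ↦ bernsteinPolynomial ℚ (k + m) (m + i)), add_zero,
        bernsteinPolynomial.eq_zero_of_lt ℚ (show k + m < m + (k + 1) by lia), sub_zero]
    have hright : derivative (∑ i ∈ range (k + 1),
        C ((-1) ^ i * k.choose i / ((m + 1 : ℕ) + i) : ℚ) * X ^ (m + 1 + i)) =
        X ^ m * (1 - X) ^ k := by
      rw [derivative_sum, sub_eq_neg_add, add_pow, mul_sum]
      refine sum_congr rfl fun i _ ↦ ?_
      have hne : ((m + 1 : ℕ) + i : ℚ) ≠ 0 := by positivity
      rw [derivative_C_mul_X_pow, Nat.cast_add (m + 1), div_mul_cancel₀ _ hne,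
        show m + 1 + i - 1 = m + i by lia]
      simp only [one_pow, mul_one, map_mul, map_pow, map_neg, map_one, map_natCast]
      rw [neg_pow (X : ℚ[X]) i]
      ring
    have hchoose : ((m + 1 : ℕ) : ℚ) * (k + (m + 1)).choose (m + 1) =
        (k + (m + 1) : ℕ) * (k + m).choose m := by
      have := Nat.add_one_mul_choose_eq (k + m) m
      rw [mul_comm]
      exact_mod_cast this.symm
    rw [hleft, derivative_C_mul, hright, hchoose, bernsteinPolynomial, add_tsub_cancel_right]
    simp only [map_mul, map_natCast]
    ring
  · simp [eval_finsetSum, bernsteinPolynomial.eval_at_0]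

theorem sum_Ico_bernsteinPolynomial_eval {k l : ℕ} (hl : 0 < l) :
    ∑ ν ∈ Ico l (k + l + 1), (bernsteinPolynomial ℚ (k + l) ν).eval (l / (k + l) : ℚ) =
      l * selfMapCoeff l / selfMapCoeff (k + l) *
        ∑ p ∈ antidiagonal k, selfMapCoeff p.1 * selfMapCoeff p.2 / (l + p.1) := by
  rw [← eval_finsetSum, sum_Ico_bernsteinPolynomial hl, sum_antidiagonal_selfMapCoeff_div hl,
    Nat.sum_antidiagonal_eq_sum_range_succ
      (fun i j ↦ (-l : ℚ) ^ i / i ! / (l + i) * ((l + k) ^ j / j !)), eval_mul, eval_C,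
    eval_finsetSum, mul_sum, mul_sum]
  refine sum_congr rfl fun i hi ↦ ?_
  obtain ⟨j, rfl⟩ := Nat.exists_eq_add_of_le (mem_range_succ_iff.1 hi)
  rw [eval_mul, eval_C, eval_pow, eval_X, Nat.cast_add_choose, Nat.cast_choose ℚ (by lia),
    add_tsub_cancel_left, add_tsub_cancel_right, selfMapCoeff, selfMapCoeff, neg_pow, div_pow]
  push_cast
  field_simp
  ring

theorem eval_sum_Ico_bernsteinPolynomial_add (k l : ℕ) (x : ℚ) :
    ∑ ν ∈ Ico l (k + l + 1), (bernsteinPolynomial ℚ (k + l) ν).eval x +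
      ∑ ν ∈ Ico k (k + l + 1), (bernsteinPolynomial ℚ (k + l) ν).eval (1 - x) =
      1 + (bernsteinPolynomial ℚ (k + l) l).eval x := by
  have hflip : ∑ ν ∈ Ico k (k + l + 1), (bernsteinPolynomial ℚ (k + l) ν).eval (1 - x) =
      ∑ ν ∈ range (l + 1), (bernsteinPolynomial ℚ (k + l) ν).eval x := by
    rw [← Nat.Ico_zero_eq_range]
    refine sum_nbij' (k + l - ·) (k + l - ·) ?_ ?_ ?_ ?_ ?_
    iterate 4 simp only [mem_Ico]; lia
    intro ν hν
    rw [← bernsteinPolynomial.flip ℚ (k + l) ν (by simp only [mem_Ico] at hν; lia)]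
    simp
  have htotal := congr_arg (eval x) (bernsteinPolynomial.sum ℚ (k + l))
  rw [eval_finsetSum, eval_one, ← sum_range_add_sum_Ico _ (show l ≤ k + l + 1 by lia)] at htotal
  rw [hflip, sum_range_succ]
  linear_combination htotal

theorem selfMapCoeff_add_eq_sum_antidiagonal {k l : ℕ} (hk : 0 < k) (hl : 0 < l) :
    selfMapCoeff (k + l) + selfMapCoeff k * selfMapCoeff l =
      l * selfMapCoeff l *
        ∑ p ∈ antidiagonal k, selfMapCoeff p.1 * selfMapCoeff p.2 / (l + p.1) +
      k * selfMapCoeff k *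
        ∑ p ∈ antidiagonal l, selfMapCoeff p.1 * selfMapCoeff p.2 / (k + p.1) := by
  have hne := selfMapCoeff_ne_zero (k + l)
  have hx : 1 - (l / (k + l) : ℚ) = k / (l + k) := by
    field_simp
    ring
  have hmid : (bernsteinPolynomial ℚ (k + l) l).eval (l / (k + l) : ℚ) =
      selfMapCoeff k * selfMapCoeff l / selfMapCoeff (k + l) := by
    rw [bernsteinPolynomial, eval_mul, eval_mul, eval_natCast, Nat.cast_choose ℚ (by lia)]
    simp only [eval_pow, eval_X, eval_sub, eval_one, hx, add_tsub_cancel_right, selfMapCoeff,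
      div_pow]
    push_cast
    field_simp
    ring
  have h := eval_sum_Ico_bernsteinPolynomial_add k l (l / (k + l))
  rw [hmid, sum_Ico_bernsteinPolynomial_eval hl, hx, add_comm k l,
    sum_Ico_bernsteinPolynomial_eval hk, add_comm l k] at h
  field_simp at h
  linear_combination -h

theorem selfMapCoeff_add_eq_sum_Ico {k l : ℕ} (hk : 0 < k) (hl : 0 < l) :
    selfMapCoeff (k + l) = 2 * selfMapCoeff k * selfMapCoeff l +
      l * selfMapCoeff l *
        ∑ b ∈ Ico 1 k, selfMapCoeff b * selfMapCoeff (k - b) / (l + b) +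
      k * selfMapCoeff k *
        ∑ b ∈ Ico 1 l, selfMapCoeff b * selfMapCoeff (l - b) / (k + b) := by
  have h := selfMapCoeff_add_eq_sum_antidiagonal hk hl
  rw [sum_antidiagonal_eq_add_sum_Ico hk (fun i j ↦ selfMapCoeff i * selfMapCoeff j / (l + i)),
    sum_antidiagonal_eq_add_sum_Ico hl (fun i j ↦ selfMapCoeff i * selfMapCoeff j / (k + i))] at h
  simp only [selfMapCoeff_zero, Nat.cast_zero, add_zero, one_mul, mul_one] at h
  have hends : selfMapCoeff k * selfMapCoeff l = l * selfMapCoeff l * (selfMapCoeff k / (l + k)) +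
      k * selfMapCoeff k * (selfMapCoeff l / (k + l)) := by
    field_simp
    ring
  have hl' : (l : ℚ) * (selfMapCoeff k / l) = selfMapCoeff k := by field_simp
  have hk' : (k : ℚ) * (selfMapCoeff l / k) = selfMapCoeff l := by field_simp
  linear_combination h + selfMapCoeff l * hl' + selfMapCoeff k * hk' - hends

end SelfMapCoefficients

section BlockIdentity

open Finset

/-- The factor `k ^ (k + 1) / k !` which a `k`-cycle contributes to Hurwitz's formula. -/
def cycleFactor (k : ℕ) : ℚ := k * selfMapCoeff k

theorem cycleFactor_ne_zero {k : ℕ} (hk : k ≠ 0) : cycleFactor k ≠ 0 :=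
  mul_ne_zero (mod_cast hk) (selfMapCoeff_ne_zero k)

theorem cycleFactor_one : cycleFactor 1 = 1 := by norm_num [cycleFactor, selfMapCoeff]

variable {ι : Type*} [DecidableEq ι]

theorem cycleFactor_mul_hurwitzSum_one_two {z : ι → ℚ} {R : Finset ι} (hz : ∀ i ∈ R, 0 ≤ z i)
    {a b : ℕ} (hb : b ∈ Ico 1 a) :
    cycleFactor b * cycleFactor (a - b) * hurwitzSum z 1 2 R (a - b : ℕ) b =
      (a + ∑ i ∈ R, z i) ^ #R / (a + ∑ i ∈ R, z i) ^ 2 *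
        (a * (a + ∑ i ∈ R, z i) * (selfMapCoeff b * selfMapCoeff (a - b) / b) -
          ∑ j ∈ R, z j * (a + z j) * (selfMapCoeff b * selfMapCoeff (a - b) / (z j + b))) := by
  rw [mem_Ico] at hb
  have hb₀ : (0 : ℚ) < b := mod_cast hb.1
  have hab₀ : (0 : ℚ) < (a - b : ℕ) := mod_cast Nat.sub_pos_of_lt hb.2
  have hab : ((a - b : ℕ) : ℚ) + b = a := mod_cast Nat.sub_add_cancel hb.2.le
  have hsum {S : Finset ι} (hS : S ⊆ R) : 0 ≤ ∑ i ∈ S, z i := sum_nonneg fun i hi ↦ hz i (hS hi)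
  have hn : (0 : ℚ) < a + ∑ i ∈ R, z i := by
    rw [← hab]
    linarith [hsum Subset.rfl]
  rw [hurwitzSum_one_two z (fun S hS ↦ (add_pos_of_pos_of_nonneg hab₀ (hsum hS)).ne')
    (fun S hS ↦ (add_pos_of_pos_of_nonneg hb₀ (hsum hS)).ne') (hab ▸ hn.ne'), hab]
  simp only [mul_sub, sum_mul, mul_sum]
  congr 1
  · unfold cycleFactor
    field_simp
  · refine sum_congr rfl fun j hj ↦ ?_
    have hj₀ : (0 : ℚ) < b + z j := add_pos_of_pos_of_nonneg hb₀ (hz j hj)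
    rw [add_comm (z j) b]
    unfold cycleFactor
    field_simp

theorem sum_Ico_cycleFactor_mul_hurwitzSum {z : ι → ℚ} {R : Finset ι} (hz : ∀ i ∈ R, 0 ≤ z i)
    {a : ℕ} (ha : 0 < a) :
    ∑ b ∈ Ico 1 a, cycleFactor b * cycleFactor (a - b) * hurwitzSum z 2 2 R b (a - b : ℕ) =
      2 * ((a + ∑ i ∈ R, z i) ^ #R / (a + ∑ i ∈ R, z i) ^ 2) *
        ((a - 1) * selfMapCoeff a - (∑ j ∈ R, z j * (a + z j) *
          ∑ b ∈ Ico 1 a, selfMapCoeff b * selfMapCoeff (a - b) / (z j + b)) /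
            (a + ∑ i ∈ R, z i)) := by
  set n := a + ∑ i ∈ R, z i with hn
  have hsum {S : Finset ι} (hS : S ⊆ R) : 0 ≤ ∑ i ∈ S, z i := sum_nonneg fun i hi ↦ hz i (hS hi)
  have ha₀ : (0 : ℚ) < a := mod_cast ha
  have hn₀ : 0 < n := add_pos_of_pos_of_nonneg ha₀ (hsum Subset.rfl)
  have hsplit : ∀ b ∈ Ico 1 a,
      n * (cycleFactor b * cycleFactor (a - b) * hurwitzSum z 2 2 R b (a - b : ℕ)) =
        cycleFactor b * cycleFactor (a - b) * hurwitzSum z 1 2 R (a - b : ℕ) b +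
          cycleFactor b * cycleFactor (a - b) * hurwitzSum z 1 2 R b (a - b : ℕ) := by
    intro b hb
    rw [mem_Ico] at hb
    have hb₀ : (0 : ℚ) < b := mod_cast hb.1
    have hab₀ : (0 : ℚ) < (a - b : ℕ) := mod_cast Nat.sub_pos_of_lt hb.2
    have hab : (b : ℚ) + (a - b : ℕ) = a := mod_cast Nat.add_sub_cancel' hb.2.le
    have h := mul_hurwitzSum_two_two z
      (fun S hS ↦ (add_pos_of_pos_of_nonneg hb₀ (hsum hS)).ne')
      (fun S hS ↦ (add_pos_of_pos_of_nonneg hab₀ (hsum hS)).ne')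
    rw [hab, ← hn] at h
    rw [← mul_add, mul_left_comm, h, add_comm]
  have hreflect :
      ∑ b ∈ Ico 1 a, cycleFactor b * cycleFactor (a - b) * hurwitzSum z 1 2 R b (a - b : ℕ) =
        ∑ b ∈ Ico 1 a, cycleFactor b * cycleFactor (a - b) * hurwitzSum z 1 2 R (a - b : ℕ) b := by
    refine sum_nbij' (a - ·) (a - ·) ?_ ?_ ?_ ?_ ?_ <;> intro b hb <;> rw [mem_Ico] at hb
    any_goals simp only [mem_Ico]; lia
    · lia
    · lia
    · rw [Nat.sub_sub_self hb.2.le, mul_comm (cycleFactor b)]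
  rw [← mul_right_inj' hn₀.ne', mul_sum, sum_congr rfl hsplit, sum_add_distrib, hreflect, ← two_mul,
    sum_congr rfl fun b hb ↦ cycleFactor_mul_hurwitzSum_one_two hz hb, ← hn, ← mul_sum,
    sum_sub_distrib, ← mul_sum, sum_Ico_selfMapCoeff_div ha, sum_comm]
  simp only [mul_sum]
  field_simp

theorem sum_sum_erase_comm {M : Type*} [AddCommMonoid M] (I : Finset ι) (f : ι → ι → M) :
    ∑ i ∈ I, ∑ j ∈ I.erase i, f i j = ∑ i ∈ I, ∑ j ∈ I.erase i, f j i :=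
  sum_comm' fun i j ↦ by
    simp only [mem_erase]
    tauto

theorem sum_sum_erase_add {R : Type*} [CommRing R] (I : Finset ι) (z : ι → R) :
    ∑ i ∈ I, ∑ j ∈ I.erase i, (z i + z j) = 2 * (#I - 1) * ∑ i ∈ I, z i := by
  simp only [sum_add_distrib]
  rw [sum_sum_erase_comm I fun _ j ↦ z j, ← two_mul, mul_assoc, mul_sum _ _ ((#I : R) - 1)]
  congr 1
  refine sum_congr rfl fun i hi ↦ ?_
  rw [sum_const, nsmul_eq_mul, cast_card_erase_of_mem hi]

theorem cycleFactor_add_div {k l : ℕ} (hk : 0 < k) (hl : 0 < l) :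
    k * l * (cycleFactor (k + l) / (cycleFactor k * cycleFactor l)) =
      2 * (k + l) +
        l * (k + l) * (∑ b ∈ Ico 1 k, selfMapCoeff b * selfMapCoeff (k - b) / (l + b)) /
          selfMapCoeff k +
        k * (l + k) * (∑ b ∈ Ico 1 l, selfMapCoeff b * selfMapCoeff (l - b) / (k + b)) /
          selfMapCoeff l := by
  have hck := selfMapCoeff_ne_zero k
  have hcl := selfMapCoeff_ne_zero l
  have hk₀ : (k : ℚ) ≠ 0 := mod_cast hk.ne'
  have hl₀ : (l : ℚ) ≠ 0 := mod_cast hl.ne'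
  unfold cycleFactor
  rw [selfMapCoeff_add_eq_sum_Ico hk hl]
  push_cast
  field_simp
  ring

theorem sum_cycleFactor_join_add_cut {I : Finset ι} {z : ι → ℕ} (hz : ∀ i ∈ I, 0 < z i) {n : ℚ}
    (hn : ∑ i ∈ I, (z i : ℚ) = n) (hn₀ : 0 < n) :
    ∑ i ∈ I, ∑ j ∈ I.erase i, z i * z j *
        (cycleFactor (z i + z j) / (cycleFactor (z i) * cycleFactor (z j))) * (n ^ #I / n ^ 4) +
      ∑ i ∈ I, z i * ∑ b ∈ Ico 1 (z i),
        cycleFactor b * cycleFactor (z i - b) / cycleFactor (z i) *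
          hurwitzSum (fun i ↦ (z i : ℚ)) 2 2 (I.erase i) b (z i - b : ℕ) =
      2 * (n + #I - 2) * (n ^ #I / n ^ 3) := by
  let cross (i j : ι) : ℚ := z j * (z i + z j) *
    (∑ b ∈ Ico 1 (z i), selfMapCoeff b * selfMapCoeff (z i - b) / (z j + b)) / selfMapCoeff (z i)
  have hjoin : ∀ i ∈ I, ∀ j ∈ I.erase i, z i * z j *
      (cycleFactor (z i + z j) / (cycleFactor (z i) * cycleFactor (z j))) * (n ^ #I / n ^ 4) =
        (2 * (z i + z j) + cross i j + cross j i) * (n ^ #I / n ^ 4) := fun i hi j hj ↦ by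
    rw [cycleFactor_add_div (hz i hi) (hz j (mem_of_mem_erase hj))]
  have hcut : ∀ i ∈ I, z i * ∑ b ∈ Ico 1 (z i),
      cycleFactor b * cycleFactor (z i - b) / cycleFactor (z i) *
        hurwitzSum (fun i ↦ (z i : ℚ)) 2 2 (I.erase i) b (z i - b : ℕ) =
      (2 * n * (z i - 1) - 2 * ∑ j ∈ I.erase i, cross i j) * (n ^ #I / n ^ 4) := fun i hi ↦ by
    have hzi : (z i : ℚ) ≠ 0 := mod_cast (hz i hi).ne'
    have hci := selfMapCoeff_ne_zero (z i)
    obtain ⟨m, hm⟩ := Nat.exists_eq_add_one.2 (card_pos.2 ⟨i, hi⟩)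
    have hcard : #(I.erase i) = m := by rw [card_erase_of_mem hi, hm, Nat.add_sub_cancel]
    simp only [div_mul_eq_mul_div, ← sum_div]
    rw [sum_Ico_cycleFactor_mul_hurwitzSum (fun _ _ ↦ Nat.cast_nonneg _) (hz i hi),
      add_sum_erase I (fun j ↦ (z j : ℚ)) hi, hn, ← sum_div, hcard, hm, pow_succ, cycleFactor]
    field_simp
    ring
  rw [sum_congr rfl fun i hi ↦ sum_congr rfl (hjoin i hi), sum_congr rfl hcut]
  have hpairs := sum_sum_erase_add I fun i ↦ (z i : ℚ)
  simp only [← sum_mul, sum_add_distrib, sum_sub_distrib, ← mul_sum] at hpairs ⊢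
  rw [sum_sum_erase_comm I fun i j ↦ cross j i, sum_const, nsmul_one, hpairs, hn]
  field_simp
  ring

end BlockIdentity

section Setoids

open Finset

section Glue

variable {V : Type*} {r s t : Setoid V} {x y : V}

/-- The finest equivalence relation coarser than `r` which relates `x` and `y`. -/
def glue (r : Setoid V) (x y : V) : Setoid V where
  r u v := r u v ∨ (r u x ∧ r y v) ∨ (r u y ∧ r x v)
  iseqv := by
    refine ⟨fun u ↦ Or.inl (r.refl u), ?_, ?_⟩ <;> intros <;> grind [r.symm', r.trans']

theorem le_glue (r : Setoid V) (x y : V) : r ≤ glue r x y := fun _ _ ↦ Or.inl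

theorem glue_rel (r : Setoid V) (x y : V) : glue r x y x y := .inr (.inl ⟨r.refl x, r.refl y⟩)

theorem glue_le_iff : glue r x y ≤ s ↔ r ≤ s ∧ s x y := by
  refine ⟨fun h ↦ ⟨(le_glue r x y).trans h, h (glue_rel r x y)⟩, ?_⟩
  rintro ⟨h, hxy⟩ u v (huv | ⟨hu, hv⟩ | ⟨hu, hv⟩)
  · exact h huv
  · exact s.trans (h hu) (s.trans hxy (h hv))
  · exact s.trans (h hu) (s.trans (s.symm hxy) (h hv))

theorem glue_of_rel (h : r x y) : glue r x y = r :=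
  le_antisymm (glue_le_iff.2 ⟨le_rfl, h⟩) (le_glue r x y)

end Glue

variable {V : Type*} [Fintype V] [DecidableEq V] {r s t : Setoid V} {x y u v : V}
  {B C : Finset V}

open scoped Classical in
/-- The partition of `V` into the classes of `r`. -/
noncomputable abbrev classPartition (r : Setoid V) : Finpartition (univ : Finset V) := .ofSetoid r

/-- The equivalence classes of `r`. -/
noncomputable abbrev parts (r : Setoid V) : Finset (Finset V) := (classPartition r).parts

/-- The equivalence class of `x` under `r`. -/
noncomputable abbrev part (r : Setoid V) (x : V) : Finset V := (classPartition r).part x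

theorem mem_part : v ∈ part r x ↔ r x v := by
  classical exact Finpartition.mem_part_ofSetoid_iff_rel

theorem self_mem_part (r : Setoid V) (x : V) : x ∈ part r x := mem_part.2 (r.refl x)

theorem part_mem_parts (r : Setoid V) (x : V) : part r x ∈ parts r :=
  (classPartition r).part_mem.2 (mem_univ x)

theorem part_eq_of_mem (hC : C ∈ parts r) (hx : x ∈ C) : part r x = C :=
  (classPartition r).part_eq_of_mem hC hx

theorem part_eq_part_iff : part r x = part r y ↔ r x y := by
  rw [(classPartition r).part_eq_iff_mem (part_mem_parts r y), mem_part]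
  exact ⟨r.symm, r.symm⟩

theorem mem_parts : C ∈ parts r ↔ ∃ x, part r x = C := by
  refine ⟨fun hC ↦ ?_, ?_⟩
  · obtain ⟨x, hx⟩ := (classPartition r).nonempty_of_mem_parts hC
    exact ⟨x, part_eq_of_mem hC hx⟩
  · rintro ⟨x, rfl⟩
    exact part_mem_parts r x

theorem card_pos_of_mem_parts (hC : C ∈ parts r) : 0 < #C :=
  card_pos.2 ((classPartition r).nonempty_of_mem_parts hC)

theorem card_part_pos (r : Setoid V) (x : V) : 0 < #(part r x) :=
  card_pos_of_mem_parts (part_mem_parts r x)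

theorem disjoint_part (h : ¬ r x y) : Disjoint (part r x) (part r y) :=
  (classPartition r).disjoint (part_mem_parts r x) (part_mem_parts r y)
    (part_eq_part_iff.not.2 h)

theorem part_mono (h : r ≤ s) (x : V) : part r x ⊆ part s x := fun _ hv ↦
  mem_part.2 (h (mem_part.1 hv))

theorem part_subset_iff (h : r ≤ s) (hB : B ∈ parts s) : part r x ⊆ B ↔ x ∈ B :=
  ⟨fun hx ↦ hx (self_mem_part r x), fun hx ↦ part_eq_of_mem hB hx ▸ part_mono h x⟩

theorem classPartition_mono (h : r ≤ s) : classPartition r ≤ classPartition s := fun C hC ↦ by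
  obtain ⟨x, rfl⟩ := mem_parts.1 hC
  exact ⟨part s x, part_mem_parts s x, part_mono h x⟩

theorem part_bot (x : V) : part (⊥ : Setoid V) x = {x} := by
  ext v
  rw [mem_part, mem_singleton]
  exact eq_comm

theorem classPartition_bot : classPartition (⊥ : Setoid V) = ⊥ := by
  ext C
  simp only [mem_parts, part_bot, Finpartition.mem_bot_iff, mem_univ, true_and]

theorem card_parts_bot : #(parts (⊥ : Setoid V)) = Fintype.card V := by
  rw [parts, classPartition_bot, Finpartition.card_bot, card_univ]

theorem eq_bot_of_card_parts (h : Fintype.card V ≤ #(parts r)) : r = ⊥ := by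
  have himage : univ.image (part r) = parts r := by
    ext C
    simp [mem_parts]
  have hinj : Set.InjOn (part r) (univ : Finset V) :=
    card_image_iff.1 (card_image_le.antisymm (by rwa [himage]))
  exact eq_bot_iff.2 fun u v huv ↦ hinj (by simp) (by simp) (part_eq_part_iff.2 huv)

section Glue

theorem part_glue_left (r : Setoid V) (x y : V) : part (glue r x y) x = part r x ∪ part r y := by
  ext v
  rw [mem_union, mem_part, mem_part, mem_part]
  constructor
  · rintro (h | ⟨-, h⟩ | ⟨-, h⟩)
    exacts [.inl h, .inr h, .inl h]
  · rintro (h | h)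
    exacts [.inl h, .inr (.inl ⟨r.refl x, h⟩)]

theorem part_glue_of_not_rel (hx : ¬ r u x) (hy : ¬ r u y) : part (glue r x y) u = part r u := by
  ext v
  rw [mem_part, mem_part]
  refine ⟨?_, .inl⟩
  rintro (h | ⟨h, -⟩ | ⟨h, -⟩)
  exacts [h, absurd h hx, absurd h hy]

theorem parts_glue (r : Setoid V) (x y : V) :
    parts (glue r x y) =
      insert (part r x ∪ part r y) (((parts r).erase (part r x)).erase (part r y)) := by
  ext C
  rw [mem_insert, mem_erase, mem_erase]
  constructor
  · intro hC
    obtain ⟨u, rfl⟩ := mem_parts.1 hC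
    by_cases hu : glue r x y u x
    · rw [part_eq_part_iff.2 hu]
      exact .inl (part_glue_left r x y)
    · have hx : ¬ r u x := fun h ↦ hu (.inl h)
      have hy : ¬ r u y := fun h ↦ hu (.inr (.inr ⟨h, r.refl x⟩))
      rw [part_glue_of_not_rel hx hy]
      exact .inr ⟨part_eq_part_iff.not.2 hy, part_eq_part_iff.not.2 hx, part_mem_parts r u⟩
  · rintro (rfl | ⟨hy, hx, hC⟩)
    · exact part_glue_left r x y ▸ part_mem_parts _ x
    · obtain ⟨u, rfl⟩ := mem_parts.1 hC
      rw [Ne, part_eq_part_iff] at hx hy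
      exact part_glue_of_not_rel hx hy ▸ part_mem_parts _ u

theorem union_notMem_erase_erase (r : Setoid V) (x y : V) :
    part r x ∪ part r y ∉ ((parts r).erase (part r x)).erase (part r y) := fun h ↦ by
  obtain ⟨-, hne, hmem⟩ := by simpa only [mem_erase] using h
  exact hne (part_eq_of_mem hmem (mem_union_left _ (self_mem_part r x))).symm

theorem part_mem_erase (h : ¬ r x y) : part r y ∈ (parts r).erase (part r x) :=
  mem_erase.2 ⟨fun hyx ↦ h (part_eq_part_iff.1 hyx.symm), part_mem_parts r y⟩

theorem prod_parts_glue {M : Type*} [CommMonoid M] (h : ¬ r x y) (f : Finset V → M) :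
    (∏ C ∈ parts (glue r x y), f C) * (f (part r x) * f (part r y)) =
      (∏ C ∈ parts r, f C) * f (part r x ∪ part r y) := by
  rw [parts_glue, prod_insert (union_notMem_erase_erase r x y),
    ← mul_prod_erase (parts r) f (part_mem_parts r x), ← mul_prod_erase _ f (part_mem_erase h)]
  ac_rfl

theorem card_parts_glue (h : ¬ r x y) : #(parts (glue r x y)) + 1 = #(parts r) := by
  rw [parts_glue, card_insert_of_notMem (union_notMem_erase_erase r x y),
    card_erase_add_one (part_mem_erase h), card_erase_add_one (part_mem_parts r x)]

theorem card_part_glue (h : ¬ r x y) :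
    #(part (glue r x y) x) = #(part r x) + #(part r y) := by
  rw [part_glue_left, card_union_of_disjoint (disjoint_part h)]

theorem card_parts_le_card_parts_glue_add_one (r : Setoid V) (x y : V) :
    #(parts r) ≤ #(parts (glue r x y)) + 1 := by
  by_cases h : r x y
  · rw [glue_of_rel h]
    exact Nat.le_succ _
  · exact (card_parts_glue h).ge

end Glue

section PartsIn

/-- The equivalence classes of `r` which are contained in `B`. -/
noncomputable def partsIn (r : Setoid V) (B : Finset V) : Finset (Finset V) := {C ∈ parts r | C ⊆ B}

theorem mem_partsIn : C ∈ partsIn r B ↔ C ∈ parts r ∧ C ⊆ B := mem_filter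

theorem sum_parts_eq_sum_partsIn {M : Type*} [AddCommMonoid M] (h : r ≤ s) (f : Finset V → M) :
    ∑ C ∈ parts r, f C = ∑ B ∈ parts s, ∑ C ∈ partsIn r B, f C := by
  rw [← sum_biUnion]
  · refine sum_congr ?_ fun _ _ ↦ rfl
    ext C
    simp only [mem_biUnion, mem_partsIn]
    exact ⟨fun hC ↦ (classPartition_mono h hC).imp fun B hB ↦ ⟨hB.1, hC, hB.2⟩,
      fun ⟨_, _, hC, _⟩ ↦ hC⟩
  · intro B hB B' hB' hne
    refine disjoint_left.2 fun C hC hC' ↦ hne ?_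
    obtain ⟨hC, hCB⟩ := mem_partsIn.1 hC
    obtain ⟨x, hx⟩ := (classPartition r).nonempty_of_mem_parts hC
    exact (classPartition s).eq_of_mem_parts hB hB' (hCB hx) ((mem_partsIn.1 hC').2 hx)

theorem biUnion_partsIn (h : r ≤ s) (hB : B ∈ parts s) : (partsIn r B).biUnion id = B := by
  ext x
  simp only [mem_biUnion, mem_partsIn]
  exact ⟨fun ⟨_, ⟨_, hC⟩, hx⟩ ↦ hC hx,
    fun hx ↦ ⟨part r x, ⟨part_mem_parts r x, (part_subset_iff h hB).2 hx⟩, self_mem_part r x⟩⟩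

theorem sum_eq_sum_partsIn {M : Type*} [AddCommMonoid M] (h : r ≤ s) (hB : B ∈ parts s)
    (f : V → M) : ∑ x ∈ B, f x = ∑ C ∈ partsIn r B, ∑ x ∈ C, f x :=
  calc ∑ x ∈ B, f x = ∑ x ∈ (partsIn r B).biUnion id, f x := by rw [biUnion_partsIn h hB]
    _ = ∑ C ∈ partsIn r B, ∑ x ∈ C, f x :=
      sum_biUnion ((classPartition r).disjoint.subset (filter_subset _ _))

theorem sum_card_partsIn (h : r ≤ s) (hB : B ∈ parts s) : ∑ C ∈ partsIn r B, #C = #B := by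
  simpa only [card_eq_sum_ones] using (sum_eq_sum_partsIn h hB fun _ ↦ 1).symm

theorem card_partsIn_glue (hr : ¬ r x y) (h : r ≤ s) (hs : s x y) (hB : B ∈ parts s) :
    #(partsIn r B) = #(partsIn (glue r x y) B) + if x ∈ B then 1 else 0 := by
  have hxy : y ∈ B ↔ x ∈ B := by
    obtain ⟨z, rfl⟩ := mem_parts.1 hB
    rw [mem_part, mem_part]
    exact ⟨fun hy ↦ s.trans hy (s.symm hs), fun hx ↦ s.trans hx hs⟩
  rw [partsIn, partsIn, card_filter, card_filter, parts_glue,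
    sum_insert (union_notMem_erase_erase r x y), ← add_sum_erase _ _ (part_mem_parts r x),
    ← add_sum_erase _ _ (part_mem_erase hr)]
  simp only [union_subset_iff, part_subset_iff h hB, hxy, and_self]
  lia

end PartsIn

end Setoids

section Cycles

open Finset Function Perm

variable {V : Type*} {r : Setoid V} {σ : Perm V} {x y : V} {b : ℕ}

theorem rel_zpow_apply (h : ∀ u, r u (σ u)) (i : ℤ) (u : V) : r u ((σ ^ i) u) := by
  induction i with
  | zero => exact r.refl u
  | succ i ih =>
    rw [add_comm, zpow_one_add, Perm.mul_apply]
    exact r.trans ih (h _)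
  | pred i ih =>
    refine r.trans ih (r.symm ?_)
    have hstep := h ((σ ^ (-(i : ℤ) - 1)) u)
    rwa [← Perm.mul_apply, ← zpow_one_add, add_sub_cancel] at hstep

theorem sameCycle_setoid_le_iff : SameCycle.setoid σ ≤ r ↔ ∀ u, r u (σ u) :=
  ⟨fun h u ↦ h ⟨1, by rw [zpow_one]⟩, fun h u _ ⟨i, hi⟩ ↦ hi ▸ rel_zpow_apply h i u⟩

theorem pow_apply_ne_self (hb : 0 < b) (hb' : b < minimalPeriod σ x) : (σ ^ b) x ≠ x :=
  Perm.iterate_eq_pow σ b ▸ not_isPeriodicPt_of_pos_of_lt_minimalPeriod hb.ne' hb'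

theorem pow_apply_injOn (σ : Perm V) (x : V) :
    Set.InjOn (fun i ↦ (σ ^ i) x) (Set.Iio (minimalPeriod σ x)) := by
  simpa only [← Perm.iterate_eq_pow] using iterate_injOn_Iio_minimalPeriod

theorem pow_apply_ne_of_lt (hb : b < minimalPeriod σ x) {i : ℕ} (hi : 0 < i) (hib : i < b) :
    (σ ^ i) x ≠ x ∧ (σ ^ i) x ≠ (σ ^ b) x :=
  ⟨pow_apply_ne_self hi (hib.trans hb),
    fun h ↦ hib.ne (pow_apply_injOn σ x (hib.trans hb) hb h)⟩

theorem pow_minimalPeriod_apply (σ : Perm V) (x : V) : (σ ^ minimalPeriod σ x) x = x :=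
  Perm.iterate_eq_pow σ _ ▸ isPeriodicPt_minimalPeriod σ x

theorem minimalPeriod_perm_pos [Finite V] (σ : Perm V) (x : V) : 0 < minimalPeriod σ x :=
  minimalPeriod_pos_of_mem_periodicPts <| σ.injective.mem_periodicPts x

theorem sameCycle_iff_exists_pow_lt [Finite V] :
    σ.SameCycle x y ↔ ∃ i < minimalPeriod σ x, (σ ^ i) x = y := by
  refine ⟨fun h ↦ ?_, fun ⟨i, _, hi⟩ ↦ ⟨i, by rwa [zpow_natCast]⟩⟩
  obtain ⟨i, rfl⟩ := h.exists_nat_pow_eq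
  refine ⟨i % minimalPeriod σ x, Nat.mod_lt _ (minimalPeriod_perm_pos σ x), ?_⟩
  simp only [← Perm.iterate_eq_pow, iterate_mod_minimalPeriod_eq]

variable [DecidableEq V]

theorem rel_swap_apply (h : r x y) (w : V) : r w (swap x y w) := by
  rw [swap_apply_def]
  split_ifs with hx hy
  · exact hx ▸ h
  · exact hy ▸ r.symm h
  · exact r.refl w

theorem sameCycle_setoid_swap_mul_le (σ : Perm V) (x y : V) :
    SameCycle.setoid (swap x y * σ) ≤ glue (SameCycle.setoid σ) x y :=
  sameCycle_setoid_le_iff.2 fun u ↦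
    (glue _ x y).trans (le_glue _ x y (sameCycle_setoid_le_iff.1 le_rfl u))
      (rel_swap_apply (glue_rel _ x y) _)

theorem sameCycle_setoid_le_glue_swap_mul (σ : Perm V) (x y : V) :
    SameCycle.setoid σ ≤ glue (SameCycle.setoid (swap x y * σ)) x y := by
  simpa only [swap_mul_self_mul] using sameCycle_setoid_swap_mul_le (swap x y * σ) x y

theorem swap_mul_pow_apply (h : ∀ i, 0 < i → i < b → (σ ^ i) x ≠ x ∧ (σ ^ i) x ≠ y) {i : ℕ}
    (hi : i < b) : ((swap x y * σ) ^ i) x = (σ ^ i) x := by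
  induction i with
  | zero => rfl
  | succ i ih =>
    rw [pow_succ', Perm.mul_apply, ih (by lia), Perm.mul_apply, ← Perm.mul_apply σ, ← pow_succ']
    exact swap_apply_of_ne_of_ne (h _ i.succ_pos hi).1 (h _ i.succ_pos hi).2

theorem swap_mul_pow_apply_of_forall_lt (hb : 0 < b)
    (h : ∀ i, 0 < i → i < b → (σ ^ i) x ≠ x ∧ (σ ^ i) x ≠ y) :
    ((swap x y * σ) ^ b) x = swap x y ((σ ^ b) x) := by
  obtain ⟨c, rfl⟩ := Nat.exists_eq_add_of_lt hb
  rw [zero_add, pow_succ', Perm.mul_apply, swap_mul_pow_apply h (by lia), Perm.mul_apply,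
    ← Perm.mul_apply σ, ← pow_succ']

section Finite

variable [Finite V]

theorem sameCycle_setoid_swap_mul_of_not_sameCycle (h : ¬ σ.SameCycle x y) :
    SameCycle.setoid (swap x y * σ) = glue (SameCycle.setoid σ) x y := by
  have hxy : (swap x y * σ).SameCycle x y := by
    have hmeet := swap_mul_pow_apply_of_forall_lt (minimalPeriod_perm_pos σ x) fun i hi hi' ↦
      ⟨pow_apply_ne_self hi hi', fun hy ↦ h ⟨i, by rwa [zpow_natCast]⟩⟩
    rw [pow_minimalPeriod_apply, swap_apply_left] at hmeet
    exact ⟨minimalPeriod σ x, by rwa [zpow_natCast]⟩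
  refine le_antisymm (sameCycle_setoid_swap_mul_le σ x y) (glue_le_iff.2 ⟨?_, hxy⟩)
  simpa only [glue_of_rel (r := SameCycle.setoid _) hxy] using
    sameCycle_setoid_le_glue_swap_mul σ x y

theorem minimalPeriod_swap_mul (hb : 0 < b) (hb' : b < minimalPeriod σ x) :
    minimalPeriod (swap x ((σ ^ b) x) * σ : Perm V) x = b := by
  have hne : ∀ i, 0 < i → i < b → (σ ^ i) x ≠ x ∧ (σ ^ i) x ≠ (σ ^ b) x :=
    fun i ↦ pow_apply_ne_of_lt hb'
  refine le_antisymm (IsPeriodicPt.minimalPeriod_le hb ?_) (not_lt.1 fun hlt ↦ ?_)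
  · rw [IsPeriodicPt, IsFixedPt, Perm.iterate_eq_pow, swap_mul_pow_apply_of_forall_lt hb hne,
      swap_apply_right]
  · refine (hne _ (minimalPeriod_perm_pos _ x) hlt).1 ?_
    rw [← swap_mul_pow_apply hne hlt, pow_minimalPeriod_apply]

theorem not_sameCycle_swap_mul (hne : y ≠ x) (h : σ.SameCycle x y) :
    ¬ (swap x y * σ).SameCycle x y := by
  obtain ⟨b, hb', rfl⟩ := sameCycle_iff_exists_pow_lt.1 h
  have hb : 0 < b := Nat.pos_of_ne_zero fun hb ↦ hne (by rw [hb, pow_zero, Perm.one_apply])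
  intro hcycle
  obtain ⟨i, hi, hib⟩ := sameCycle_iff_exists_pow_lt.1 hcycle
  rw [minimalPeriod_swap_mul hb hb'] at hi
  rw [swap_mul_pow_apply (fun i ↦ pow_apply_ne_of_lt hb') hi] at hib
  exact hi.ne (pow_apply_injOn σ x (hi.trans hb') hb' hib)

theorem glue_sameCycle_setoid_swap_mul (hne : y ≠ x) (h : σ.SameCycle x y) :
    glue (SameCycle.setoid (swap x y * σ)) x y = SameCycle.setoid σ := by
  rw [← sameCycle_setoid_swap_mul_of_not_sameCycle (not_sameCycle_swap_mul hne h),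
    swap_mul_self_mul]

theorem rel_of_swap_mul_le (h : ¬ σ.SameCycle x y) (hle : SameCycle.setoid (swap x y * σ) ≤ r) :
    r x y := by
  rw [sameCycle_setoid_swap_mul_of_not_sameCycle h] at hle
  exact (glue_le_iff.1 hle).2

end Finite

variable [Fintype V]

theorem part_sameCycle_setoid (σ : Perm V) (x : V) :
    part (SameCycle.setoid σ) x =
      (range (minimalPeriod σ x)).image fun i ↦ (σ ^ i) x := by
  ext v
  simp only [mem_part, mem_image, mem_range]
  exact sameCycle_iff_exists_pow_lt

theorem card_part_sameCycle_setoid (σ : Perm V) (x : V) :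
    #(part (SameCycle.setoid σ) x) = minimalPeriod σ x := by
  rw [part_sameCycle_setoid, card_image_of_injOn, card_range]
  simpa only [coe_range] using pow_apply_injOn σ x

theorem part_sameCycle_setoid_erase (σ : Perm V) (x : V) :
    (part (SameCycle.setoid σ) x).erase x =
      (Ico 1 (minimalPeriod σ x)).image fun i ↦ (σ ^ i) x := by
  have hrange : range (minimalPeriod σ x) = insert 0 (Ico 1 (minimalPeriod σ x)) := by
    rw [range_eq_Ico, Nat.Ico_succ_left_eq_erase_Ico,
      insert_erase (left_mem_Ico.2 (minimalPeriod_perm_pos σ x))]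
  rw [part_sameCycle_setoid, hrange, image_insert, pow_zero, Perm.one_apply, erase_insert]
  simp only [mem_image, mem_Ico, not_exists, not_and]
  exact fun i hi ↦ pow_apply_ne_self hi.1 hi.2

theorem sum_card_part_swap_mul {M : Type*} [AddCommMonoid M] (σ : Perm V) (x : V) (F : ℕ → M) :
    ∑ y ∈ (part (SameCycle.setoid σ) x).erase x,
        F #(part (SameCycle.setoid (swap x y * σ)) x) =
      ∑ b ∈ Ico 1 #(part (SameCycle.setoid σ) x), F b := by
  rw [part_sameCycle_setoid_erase, card_part_sameCycle_setoid, sum_image]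
  · refine sum_congr rfl fun b hb ↦ ?_
    rw [mem_Ico] at hb
    rw [card_part_sameCycle_setoid, minimalPeriod_swap_mul hb.1 hb.2]
  · exact (pow_apply_injOn σ x).mono fun i hi ↦ (mem_Ico.1 hi).2

end Cycles

section Weight

open Finset

variable {V : Type*} [Fintype V] [DecidableEq V] {r s : Setoid V} {x y : V} {B : Finset V}

/-- The factor of `weight s r` at a class `B` of `s`. If `B` is a union of `m` classes of `r`, this
is `|B|^(m - 3)`; writing it as a quotient avoids negative exponents. -/
noncomputable def blockWeight (r : Setoid V) (B : Finset V) : ℚ :=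
  (#B : ℚ) ^ #(partsIn r B) / (#B : ℚ) ^ 3

/-- The expected number, up to the factor `k!`, of minimal factorizations into `k` transpositions
with orbit relation `s` of a permutation with cycle partition `r`. -/
noncomputable def weight (s r : Setoid V) : ℚ :=
  (∏ C ∈ parts r, cycleFactor #C) * ∏ B ∈ parts s, blockWeight r B

theorem cast_card_part_ne_zero (r : Setoid V) (x : V) : (#(part r x) : ℚ) ≠ 0 :=
  Nat.cast_ne_zero.2 (card_part_pos r x).ne'

theorem cycleFactor_card_part_ne_zero (r : Setoid V) (x : V) : cycleFactor #(part r x) ≠ 0 :=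
  cycleFactor_ne_zero (card_part_pos r x).ne'

theorem blockWeight_part_ne_zero (r s : Setoid V) (x : V) : blockWeight r (part s x) ≠ 0 :=
  div_ne_zero (pow_ne_zero _ (cast_card_part_ne_zero s x))
    (pow_ne_zero _ (cast_card_part_ne_zero s x))

theorem blockWeight_part_glue (hr : ¬ r x y) (h : r ≤ s) (hs : s x y) :
    blockWeight r (part s x) = blockWeight (glue r x y) (part s x) * #(part s x) := by
  rw [blockWeight, blockWeight, card_partsIn_glue hr h hs (part_mem_parts s x),
    if_pos (self_mem_part s x), pow_succ, div_mul_eq_mul_div]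

theorem blockWeight_glue_of_notMem (hr : ¬ r x y) (h : r ≤ s) (hs : s x y) (hB : B ∈ parts s)
    (hx : x ∉ B) : blockWeight (glue r x y) B = blockWeight r B := by
  rw [blockWeight, blockWeight, card_partsIn_glue hr h hs hB, if_neg hx, add_zero]

theorem prod_cycleFactor_glue (hr : ¬ r x y) :
    ∏ C ∈ parts (glue r x y), cycleFactor #C = (∏ C ∈ parts r, cycleFactor #C) *
      (cycleFactor (#(part r x) + #(part r y)) /
        (cycleFactor #(part r x) * cycleFactor #(part r y))) := by
  have hprod := prod_parts_glue hr fun C ↦ cycleFactor #C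
  rw [card_union_of_disjoint (disjoint_part hr)] at hprod
  rw [← mul_div_assoc, eq_div_iff, hprod]
  exact mul_ne_zero (cycleFactor_card_part_ne_zero r x) (cycleFactor_card_part_ne_zero r y)

theorem prod_blockWeight_glue (hr : ¬ r x y) (h : r ≤ s) (hs : s x y) :
    ∏ B ∈ parts s, blockWeight (glue r x y) B =
      (∏ B ∈ parts s, blockWeight r B) * (1 / #(part s x)) := by
  have hrest : ∏ B ∈ (parts s).erase (part s x), blockWeight (glue r x y) B =
      ∏ B ∈ (parts s).erase (part s x), blockWeight r B := prod_congr rfl fun B hB ↦ by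
    obtain ⟨hne, hB⟩ := mem_erase.1 hB
    exact blockWeight_glue_of_notMem hr h hs hB fun hx ↦ hne (part_eq_of_mem hB hx).symm
  rw [← mul_prod_erase _ _ (part_mem_parts s x), hrest,
    ← mul_prod_erase (parts s) (blockWeight r) (part_mem_parts s x),
    blockWeight_part_glue hr h hs]
  field_simp [cast_card_part_ne_zero s x]

theorem weight_glue_right (hr : ¬ r x y) (h : r ≤ s) (hs : s x y) :
    weight s (glue r x y) = weight s r *
      (cycleFactor (#(part r x) + #(part r y)) /
        (cycleFactor #(part r x) * cycleFactor #(part r y)) * (1 / #(part s x))) := by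
  rw [weight, weight, prod_cycleFactor_glue hr, prod_blockWeight_glue hr h hs]
  ring

theorem weight_glue_left (hs : ¬ s x y) :
    weight (glue s x y) r * (blockWeight r (part s x) * blockWeight r (part s y)) =
      weight s r * blockWeight r (part (glue s x y) x) := by
  rw [weight, weight, mul_assoc, prod_parts_glue hs, part_glue_left, mul_assoc]

theorem weight_eq_weight_glue_glue (hr : ¬ r x y) (hs : ¬ s x y) (h : r ≤ s) :
    weight s r = weight (glue s x y) (glue r x y) *
      (cycleFactor #(part r x) * cycleFactor #(part r y) /
        cycleFactor (#(part r x) + #(part r y)) *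
      (blockWeight r (part s x) * blockWeight r (part s y) /
        blockWeight (glue r x y) (part (glue s x y) x))) := by
  have hle : r ≤ glue s x y := h.trans (le_glue s x y)
  have hleft := weight_glue_left (r := r) hs
  rw [blockWeight_part_glue hr hle (glue_rel s x y)] at hleft
  rw [weight_glue_right hr hle (glue_rel s x y)]
  have hx := cycleFactor_card_part_ne_zero r x
  have hy := cycleFactor_card_part_ne_zero r y
  have hxy : cycleFactor (#(part r x) + #(part r y)) ≠ 0 :=
    card_part_glue hr ▸ cycleFactor_card_part_ne_zero (glue r x y) x
  have hB := cast_card_part_ne_zero (glue s x y) x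
  have hw := blockWeight_part_ne_zero (glue r x y) (glue s x y) x
  field_simp
  linear_combination -hleft

theorem weight_bot : weight (⊥ : Setoid V) ⊥ = 1 := by
  have hpart : ∀ C ∈ parts (⊥ : Setoid V), #C = 1 := fun C hC ↦ by
    obtain ⟨x, rfl⟩ := mem_parts.1 hC
    rw [part_bot, card_singleton]
  rw [weight, prod_eq_one, prod_eq_one, one_mul]
  · exact fun B hB ↦ by rw [blockWeight, hpart B hB]; norm_num
  · exact fun C hC ↦ by rw [hpart C hC, cycleFactor_one]

end Weight

section Splitting

open Finset

instance (V : Type*) [Finite V] : Finite (Setoid V) :=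
  Finite.of_injective (fun r : Setoid V ↦ fun u v ↦ r u v) fun _ _ h ↦
    Setoid.ext fun u v ↦ iff_of_eq (congrFun₂ h u v)

noncomputable instance (V : Type*) [Finite V] : Fintype (Setoid V) := .ofFinite _

variable {V : Type*} {r s t t' : Setoid V} {x y u v : V}

/-- The relation `s` with every class `B` cut into `B ∩ A` and `B \ A`. -/
def splitAt (s : Setoid V) (A : Finset V) : Setoid V := s ⊓ Setoid.ker (· ∈ A)

theorem splitAt_rel {A : Finset V} : splitAt s A u v ↔ s u v ∧ (u ∈ A ↔ v ∈ A) := by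
  rw [splitAt, Setoid.inf_iff_and, Setoid.ker_def, eq_iff_iff]

variable [Fintype V] [DecidableEq V] {A : Finset V} {T : Finset (Finset V)}

theorem part_splitAt (hx : x ∈ A) (hA : A ⊆ part s x) : part (splitAt s A) x = A := by
  ext u
  rw [mem_part, splitAt_rel]
  exact ⟨fun h ↦ h.2.1 hx, fun hu ↦ ⟨mem_part.1 (hA hu), iff_of_true hx hu⟩⟩

theorem glue_splitAt (hx : x ∈ A) (hy : y ∉ A) (hA : A ⊆ part s x) (hxy : s x y) :
    glue (splitAt s A) x y = s := by
  refine le_antisymm (glue_le_iff.2 ⟨inf_le_left, hxy⟩) fun u v huv ↦ ?_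
  have hsA : ∀ w ∈ A, s x w := fun w hw ↦ mem_part.1 (hA hw)
  change splitAt s A u v ∨ (splitAt s A u x ∧ splitAt s A y v) ∨
    (splitAt s A u y ∧ splitAt s A x v)
  simp only [splitAt_rel]
  grind [s.symm', s.trans']

theorem splitAt_glue_part (ht : ¬ t x y) : splitAt (glue t x y) (part t x) = t := by
  ext u v
  rw [splitAt_rel, mem_part, mem_part]
  change (t u v ∨ (t u x ∧ t y v) ∨ (t u y ∧ t x v)) ∧ _ ↔ _
  grind [t.symm', t.trans']

theorem mem_biUnion_iff_part_mem (hT : T ⊆ parts r) : x ∈ T.biUnion id ↔ part r x ∈ T := by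
  refine ⟨fun hx ↦ ?_, fun hx ↦ mem_biUnion.2 ⟨_, hx, self_mem_part r x⟩⟩
  obtain ⟨C, hC, hxC⟩ := mem_biUnion.1 hx
  exact part_eq_of_mem (hT hC) hxC ▸ hC

theorem le_splitAt_biUnion (h : r ≤ s) (hT : T ⊆ parts r) : r ≤ splitAt s (T.biUnion id) :=
  fun u v huv ↦ splitAt_rel.2 ⟨h huv, by
    rw [mem_biUnion_iff_part_mem hT, mem_biUnion_iff_part_mem hT, part_eq_part_iff.2 huv]⟩

theorem partsIn_biUnion (hT : T ⊆ parts r) : partsIn r (T.biUnion id) = T := by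
  ext C
  refine mem_partsIn.trans ⟨fun ⟨hC, hCT⟩ ↦ ?_, fun hC ↦ ⟨hT hC, subset_biUnion_of_mem id hC⟩⟩
  obtain ⟨x, rfl⟩ := mem_parts.1 hC
  exact (mem_biUnion_iff_part_mem hT).1 (hCT (self_mem_part r x))

theorem part_mem_partsIn_part (h : r ≤ t) : part r u ∈ partsIn r (part t x) ↔ t x u := by
  rw [mem_partsIn, part_subset_iff h (part_mem_parts t x), mem_part]
  exact and_iff_right (part_mem_parts r u)

theorem partsIn_part_glue (h : r ≤ t) :
    partsIn r (part (glue t x y) x) = partsIn r (part t x) ∪ partsIn r (part t y) := by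
  ext C
  by_cases hC : C ∈ parts r
  · obtain ⟨u, rfl⟩ := mem_parts.1 hC
    rw [mem_union, part_mem_partsIn_part (h.trans (le_glue t x y)), part_mem_partsIn_part h,
      part_mem_partsIn_part h, ← mem_part, part_glue_left, mem_union, mem_part, mem_part]
  · simp only [mem_union, mem_partsIn, hC, false_and, or_self]

theorem disjoint_partsIn_part (ht : ¬ t x y) :
    Disjoint (partsIn r (part t x)) (partsIn r (part t y)) :=
  disjoint_left.2 fun C hCx hCy ↦ by
    obtain ⟨u, rfl⟩ := mem_parts.1 (mem_partsIn.1 hCx).1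
    have hu := self_mem_part r u
    exact disjoint_left.1 (disjoint_part ht) ((mem_partsIn.1 hCx).2 hu) ((mem_partsIn.1 hCy).2 hu)

theorem partsIn_glue_erase (r : Setoid V) (x y : V) (B : Finset V) :
    (partsIn (glue r x y) B).erase (part (glue r x y) x) =
      ((partsIn r B).erase (part r x)).erase (part r y) := by
  have hnot := union_notMem_erase_erase r x y
  ext C
  simp only [mem_erase, mem_partsIn, parts_glue, part_glue_left, mem_insert] at hnot ⊢
  grind

theorem partsIn_erase_subset (h : r ≤ t) (hts : t ≤ s) (ht : ¬ t x y) :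
    (partsIn r (part t x)).erase (part r x) ⊆
      ((partsIn r (part s x)).erase (part r x)).erase (part r y) := fun C hC ↦ by
  obtain ⟨hCx, hC⟩ := mem_erase.1 hC
  refine mem_erase.2 ⟨?_, mem_erase.2 ⟨hCx, ?_⟩⟩
  · rintro rfl
    exact ht ((part_mem_partsIn_part h).1 hC)
  · exact mem_partsIn.2 ⟨(mem_partsIn.1 hC).1, (mem_partsIn.1 hC).2.trans (part_mono hts x)⟩

theorem partsIn_glue_sdiff (h : r ≤ t) (ht : ¬ t x y) :
    ((partsIn r (part (glue t x y) x)).erase (part r x)).erase (part r y) \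
        (partsIn r (part t x)).erase (part r x) = (partsIn r (part t y)).erase (part r y) := by
  have hdisj := disjoint_left.1 (disjoint_partsIn_part (r := r) ht)
  have hx : part r x ∈ partsIn r (part t x) := (part_mem_partsIn_part h).2 (t.refl x)
  rw [partsIn_part_glue h]
  ext C
  simp only [mem_sdiff, mem_erase, mem_union]
  grind

theorem blockWeight_part_eq (h : r ≤ t) (x : V) :
    blockWeight r (part t x) =
      (#(part r x) + ∑ C ∈ (partsIn r (part t x)).erase (part r x), (#C : ℚ)) ^
          #((partsIn r (part t x)).erase (part r x)) /
        (#(part r x) + ∑ C ∈ (partsIn r (part t x)).erase (part r x), (#C : ℚ)) ^ 2 := by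
  have hmem : part r x ∈ partsIn r (part t x) := (part_mem_partsIn_part h).2 (t.refl x)
  have hcard : #(part r x) + ∑ C ∈ (partsIn r (part t x)).erase (part r x), (#C : ℚ) =
      #(part t x) := by
    rw [add_sum_erase _ (fun C ↦ (#C : ℚ)) hmem]
    exact_mod_cast sum_card_partsIn h (part_mem_parts t x)
  rw [hcard, blockWeight, ← card_erase_add_one hmem, pow_succ, pow_succ _ 2,
    mul_div_mul_right _ _ (cast_card_part_ne_zero t x)]

theorem left_mem_biUnion_insert_part (r : Setoid V) (x : V) (S : Finset (Finset V)) :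
    x ∈ (insert (part r x) S).biUnion id :=
  mem_biUnion.2 ⟨part r x, mem_insert_self _ S, self_mem_part r x⟩

section OfSubset

variable {S : Finset (Finset V)}
  (hS : S ⊆ ((partsIn r (part s x)).erase (part r x)).erase (part r y))

include hS

theorem part_left_notMem_of_subset : part r x ∉ S := fun hx ↦
  (mem_erase.1 (mem_erase.1 (hS hx)).2).1 rfl

theorem part_right_notMem_insert (hr : ¬ r x y) : part r y ∉ insert (part r x) S := fun hy ↦
  (mem_insert.1 hy).elim (fun hyx ↦ hr (part_eq_part_iff.1 hyx.symm))
    fun hy ↦ (mem_erase.1 (hS hy)).1 rfl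

theorem insert_part_subset_partsIn (h : r ≤ s) :
    insert (part r x) S ⊆ partsIn r (part s x) :=
  insert_subset ((part_mem_partsIn_part h).2 (s.refl x))
    (hS.trans ((erase_subset _ _).trans (erase_subset _ _)))

theorem insert_part_subset_parts (h : r ≤ s) : insert (part r x) S ⊆ parts r :=
  (insert_part_subset_partsIn hS h).trans (filter_subset _ _)

theorem biUnion_insert_part_subset (h : r ≤ s) : (insert (part r x) S).biUnion id ⊆ part s x :=
  biUnion_subset.2 fun _ hC ↦ (mem_partsIn.1 (insert_part_subset_partsIn hS h hC)).2

theorem right_notMem_biUnion_insert_part (hr : ¬ r x y) (h : r ≤ s) :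
    y ∉ (insert (part r x) S).biUnion id :=
  (mem_biUnion_iff_part_mem (insert_part_subset_parts hS h)).not.2 (part_right_notMem_insert hS hr)

end OfSubset

open scoped Classical in
/-- A relation `t` with `glue t x y = s` cuts the class of `x` under `s` in two, and `r ≤ t` says
that both halves are unions of classes of `r`; the summand of `hurwitzSum` indexed by `S` belongs to
the cut for which `S` consists of the classes other than `part r x` on the side of `x`. -/
theorem sum_blockWeight_mul_blockWeight (hr : ¬ r x y) (h : glue r x y ≤ s) :
    ∑ t with glue t x y = s ∧ ¬ t x y ∧ r ≤ t, blockWeight r (part t x) * blockWeight r (part t y) =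
      hurwitzSum (fun C : Finset V ↦ (#C : ℚ)) 2 2
        ((partsIn (glue r x y) (part s x)).erase (part (glue r x y) x))
        #(part r x) #(part r y) := by
  obtain ⟨hrs, hxy⟩ := glue_le_iff.1 h
  rw [hurwitzSum, partsIn_glue_erase]
  refine sum_bij' (fun t _ ↦ (partsIn r (part t x)).erase (part r x))
    (fun S _ ↦ splitAt s ((insert (part r x) S).biUnion id)) ?_ ?_ ?_ ?_ ?_
  · rintro t ht
    obtain ⟨rfl, ht, hrt⟩ := (mem_filter.1 ht).2
    exact mem_powerset.2 (partsIn_erase_subset hrt (le_glue t x y) ht)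
  · intro S hS
    rw [mem_powerset] at hS
    have hxA := left_mem_biUnion_insert_part r x S
    have hyA := right_notMem_biUnion_insert_part hS hr hrs
    exact mem_filter.2 ⟨mem_univ _,
      glue_splitAt hxA hyA (biUnion_insert_part_subset hS hrs) hxy,
      fun h ↦ hyA ((splitAt_rel.1 h).2.1 hxA),
      le_splitAt_biUnion hrs (insert_part_subset_parts hS hrs)⟩
  · rintro t ht
    obtain ⟨rfl, ht, hrt⟩ := (mem_filter.1 ht).2
    rw [insert_erase ((part_mem_partsIn_part hrt).2 (t.refl x)),
      biUnion_partsIn hrt (part_mem_parts t x), splitAt_glue_part ht]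
  · intro S hS
    rw [mem_powerset] at hS
    rw [part_splitAt (left_mem_biUnion_insert_part r x S) (biUnion_insert_part_subset hS hrs),
      partsIn_biUnion (insert_part_subset_parts hS hrs),
      erase_insert (part_left_notMem_of_subset hS)]
  · rintro t ht
    obtain ⟨rfl, ht, hrt⟩ := (mem_filter.1 ht).2
    rw [partsIn_glue_sdiff hrt ht, blockWeight_part_eq hrt x, blockWeight_part_eq hrt y]

end Splitting

section Factorizations

open Finset Perm

section Orbits

variable {V : Type*} {s : Setoid V}

/-- The relation of lying in the same orbit of the group generated by `S`. -/
abbrev orbitSetoid (S : Set (Perm V)) : Setoid V := MulAction.orbitRel (Subgroup.closure S) V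

theorem orbitSetoid_rel {S : Set (Perm V)} {u v : V} :
    orbitSetoid S u v ↔ ∃ g ∈ Subgroup.closure S, g u = v := by
  refine ⟨fun ⟨g, hg⟩ ↦ ?_, fun ⟨g, hg, hgu⟩ ↦ ?_⟩
  · exact ⟨g⁻¹, inv_mem g.2, inv_eq_iff_eq.2 hg.symm⟩
  · exact ⟨⟨g⁻¹, inv_mem hg⟩, inv_eq_iff_eq.2 hgu.symm⟩

theorem orbitSetoid_le_iff {S : Set (Perm V)} :
    orbitSetoid S ≤ s ↔ ∀ g ∈ S, ∀ u, s u (g u) := by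
  refine ⟨fun h g hg u ↦ h (orbitSetoid_rel.2 ⟨g, Subgroup.subset_closure hg, rfl⟩),
    fun h u v huv ↦ ?_⟩
  obtain ⟨g, hg, rfl⟩ := orbitSetoid_rel.1 huv
  clear huv
  induction hg using Subgroup.closure_induction generalizing u with
  | mem g hg => exact h g hg u
  | one => exact s.refl u
  | mul g h _ _ hg hh => exact s.trans (hh u) (hg (h u))
  | inv g _ hg =>
    have h := hg (g⁻¹ u)
    rw [← Perm.mul_apply, mul_inv_cancel, Perm.one_apply] at h
    exact s.symm h

theorem orbitSetoid_insert_swap [DecidableEq V] (S : Set (Perm V)) (x y : V) :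
    orbitSetoid (insert (swap x y) S) = glue (orbitSetoid S) x y := by
  refine eq_of_forall_ge_iff fun s ↦ ?_
  rw [glue_le_iff, orbitSetoid_le_iff, orbitSetoid_le_iff, Set.forall_mem_insert, and_comm]
  refine and_congr_right fun _ ↦ ⟨fun h ↦ ?_, fun h u ↦ rel_swap_apply h u⟩
  simpa only [swap_apply_left] using h x

theorem orbitSetoid_empty : orbitSetoid (∅ : Set (Perm V)) = ⊥ :=
  le_bot_iff.1 (orbitSetoid_le_iff.2 fun _ h ↦ h.elim)

theorem orbitSetoid_eq_top_iff {S : Set (Perm V)} :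
    orbitSetoid S = ⊤ ↔ ∀ x y, ∃ g ∈ Subgroup.closure S, g x = y := by
  simp only [← orbitSetoid_rel, Setoid.eq_top_iff]

theorem orbitSetoid_singleton_union {S : Set (Perm V)} {g : Perm V} (hg : g ∈ Subgroup.closure S) :
    orbitSetoid ({g} ∪ S) = orbitSetoid S := by
  have hclosure : Subgroup.closure ({g} ∪ S) = Subgroup.closure S := by
    rwa [Subgroup.closure_union, ← Subgroup.zpowers_eq_closure, sup_eq_right, Subgroup.zpowers_le]
  rw [orbitSetoid, hclosure]

end Orbits

theorem isSwap_eq_swap_of_apply_ne {V : Type*} [DecidableEq V] {τ : Perm V} (hτ : τ.IsSwap)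
    {x : V} (hx : τ x ≠ x) : τ = swap x (τ x) :=
  hτ.isCycle.eq_swap_of_apply_apply_eq_self hx (by
    obtain ⟨a, b, -, rfl⟩ := hτ
    rw [← Perm.mul_apply, swap_mul_self, Perm.one_apply])

variable {V : Type*} [Fintype V] [DecidableEq V] {s t : Setoid V} {σ : Perm V} {x y : V} {k : ℕ}

open scoped Classical in
theorem two_mul_sum_isSwap {R : Type*} [Semiring R] (F : Perm V → R) :
    2 * ∑ τ : Perm V with τ.IsSwap, F τ = ∑ x, ∑ y ∈ univ.erase x, F (swap x y) := by
  have hfix (x : V) : ∑ y ∈ univ.erase x, F (swap x y) =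
      ∑ τ : Perm V with τ.IsSwap ∧ x ∈ τ.support, F τ := by
    refine sum_nbij' (swap x) (· x) ?_ ?_ ?_ ?_ fun _ _ ↦ rfl
    · intro y hy
      have hyx := ne_of_mem_erase hy
      exact mem_filter.2 ⟨mem_univ _, ⟨x, y, hyx.symm, rfl⟩,
        mem_support.2 ((swap_apply_left x y).trans_ne hyx)⟩
    · exact fun τ hτ ↦ mem_erase.2 ⟨mem_support.1 (mem_filter.1 hτ).2.2, mem_univ _⟩
    · exact fun y _ ↦ swap_apply_left x y
    · intro τ hτ
      obtain ⟨-, hswap, hx⟩ := mem_filter.1 hτ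
      exact (isSwap_eq_swap_of_apply_ne hswap (mem_support.1 hx)).symm
  calc 2 * ∑ τ : Perm V with τ.IsSwap, F τ
      = ∑ τ : Perm V with τ.IsSwap, ∑ _x ∈ τ.support, F τ := by
        rw [mul_sum]
        refine sum_congr rfl fun τ hτ ↦ ?_
        rw [sum_const, card_support_eq_two.2 (mem_filter.1 hτ).2, nsmul_eq_mul, Nat.cast_ofNat]
    _ = ∑ x, ∑ τ : Perm V with τ.IsSwap ∧ x ∈ τ.support, F τ :=
        sum_comm' fun τ x ↦ by simp only [mem_filter, mem_univ, true_and, and_true]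
    _ = ∑ x, ∑ y ∈ univ.erase x, F (swap x y) := sum_congr rfl fun x _ ↦ (hfix x).symm

open scoped Classical in
/-- The factorizations of `σ` into `k` transpositions which generate a group with orbit relation
`s`. -/
noncomputable def factorizations (k : ℕ) (s : Setoid V) (σ : Perm V) : Finset (Fin k → Perm V) :=
  {f | (∀ i, (f i).IsSwap) ∧ (List.ofFn f).prod = σ ∧ orbitSetoid (Set.range f) = s}

open scoped Classical in
theorem mem_factorizations {f : Fin k → Perm V} :
    f ∈ factorizations k s σ ↔
      (∀ i, (f i).IsSwap) ∧ (List.ofFn f).prod = σ ∧ orbitSetoid (Set.range f) = s :=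
  mem_filter_univ _

theorem prod_ofFn_mem_closure {G : Type*} [Group G] {k : ℕ} (f : Fin k → G) :
    (List.ofFn f).prod ∈ Subgroup.closure (Set.range f) :=
  Subgroup.list_prod_mem _ fun _ hg ↦ Subgroup.subset_closure (List.mem_ofFn.1 hg)

theorem sameCycle_setoid_le_of_mem_factorizations {f : Fin k → Perm V}
    (hf : f ∈ factorizations k s σ) : SameCycle.setoid σ ≤ s := by
  obtain ⟨-, rfl, rfl⟩ := mem_factorizations.1 hf
  exact sameCycle_setoid_le_iff.2 fun u ↦ orbitSetoid_rel.2 ⟨_, prod_ofFn_mem_closure f, rfl⟩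

theorem factorizations_zero : factorizations 0 (⊥ : Setoid V) 1 = univ :=
  eq_univ_of_forall fun f ↦ mem_factorizations.2
    ⟨fun i ↦ i.elim0, rfl, by rw [Set.range_eq_empty, orbitSetoid_empty]⟩

theorem cons_swap_mem_factorizations (hxy : x ≠ y) {f : Fin k → Perm V} :
    (Fin.cons (swap x y) f : Fin (k + 1) → Perm V) ∈ factorizations (k + 1) s σ ↔
      glue (orbitSetoid (Set.range f)) x y = s ∧
        f ∈ factorizations k (orbitSetoid (Set.range f)) (swap x y * σ) := by
  have hswap : (swap x y).IsSwap := ⟨x, y, hxy, rfl⟩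
  simp only [mem_factorizations, Fin.forall_fin_succ, Fin.cons_zero, Fin.cons_succ, hswap,
    List.ofFn_succ, List.prod_cons, Fin.range_cons, orbitSetoid_insert_swap, true_and, and_true]
  rw [← swap_inv x y, eq_inv_mul_iff_mul_eq, swap_inv]
  tauto

/-- The number of factorizations of `σ` into `k + 1` transpositions with orbit relation `s`
which start with the transposition of `x` and `y`. -/
noncomputable def pairCount (k : ℕ) (s : Setoid V) (σ : Perm V) (x y : V) : ℕ :=
  #{f ∈ factorizations (k + 1) s σ | f 0 = swap x y}

open scoped Classical in
theorem pairCount_eq_sum (hxy : x ≠ y) :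
    pairCount k s σ x y = ∑ t with glue t x y = s, #(factorizations k t (swap x y * σ)) := by
  rw [← card_sigma]
  refine card_nbij' (fun f ↦ ⟨orbitSetoid (Set.range (Fin.tail f)), Fin.tail f⟩)
    (fun p ↦ Fin.cons (swap x y) p.2) ?_ ?_ ?_ ?_
  · intro f hf
    obtain ⟨hf, hf₀⟩ := mem_filter.1 hf
    rw [← Fin.cons_self_tail f, hf₀, cons_swap_mem_factorizations hxy] at hf
    exact mem_sigma.2 ⟨(mem_filter_univ _).2 hf.1, hf.2⟩
  · rintro ⟨t, f⟩ hp
    obtain ⟨ht, hf⟩ := mem_sigma.1 hp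
    have ht' : orbitSetoid (Set.range f) = t := (mem_factorizations.1 hf).2.2
    subst ht'
    have hglue : glue (orbitSetoid (Set.range f)) x y = s := (mem_filter.1 ht).2
    exact mem_filter.2 ⟨(cons_swap_mem_factorizations hxy).2 ⟨hglue, hf⟩, rfl⟩
  · intro f hf
    exact (mem_filter.1 hf).2 ▸ Fin.cons_self_tail f
  · rintro ⟨t, f⟩ hp
    have ht : orbitSetoid (Set.range f) = t := (mem_factorizations.1 (mem_sigma.1 hp).2).2.2
    subst ht
    rfl

theorem two_mul_card_factorizations_succ (k : ℕ) (s : Setoid V) (σ : Perm V) :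
    2 * #(factorizations (k + 1) s σ) = ∑ x, ∑ y ∈ univ.erase x, pairCount k s σ x y := by
  classical
  unfold pairCount
  rw [← two_mul_sum_isSwap fun τ ↦ #{f ∈ factorizations (k + 1) s σ | f 0 = τ},
    ← card_eq_sum_card_fiberwise]
  exact fun f hf ↦ (mem_filter_univ _).2 ((mem_factorizations.1 hf).1 0)

theorem card_parts_swap_mul (hne : y ≠ x) (h : σ.SameCycle x y) :
    #(parts (SameCycle.setoid (swap x y * σ))) = #(parts (SameCycle.setoid σ)) + 1 := by
  rw [← card_parts_glue (not_sameCycle_swap_mul hne h), glue_sameCycle_setoid_swap_mul hne h]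

theorem card_parts_swap_mul_of_not_sameCycle (h : ¬ σ.SameCycle x y) :
    #(parts (SameCycle.setoid (swap x y * σ))) + 1 = #(parts (SameCycle.setoid σ)) := by
  rw [sameCycle_setoid_swap_mul_of_not_sameCycle h, card_parts_glue h]

theorem card_add_card_parts_le_of_mem_factorizations {f : Fin k → Perm V}
    (hf : f ∈ factorizations k s σ) :
    Fintype.card V + #(parts (SameCycle.setoid σ)) ≤ k + 2 * #(parts s) := by
  induction k generalizing s σ with
  | zero =>
    obtain ⟨-, rfl, rfl⟩ := mem_factorizations.1 hf
    rw [Set.range_eq_empty, orbitSetoid_empty, card_parts_bot]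
    have := (classPartition (SameCycle.setoid (1 : Perm V))).card_parts_le_card
    rw [card_univ] at this
    rw [List.ofFn_zero, List.prod_nil]
    lia
  | succ k ih =>
    obtain ⟨x, y, hxy, hf₀⟩ := (mem_factorizations.1 hf).1 0
    rw [← Fin.cons_self_tail f, hf₀, cons_swap_mem_factorizations hxy] at hf
    obtain ⟨rfl, hf⟩ := hf
    have hle := ih hf
    by_cases h : σ.SameCycle x y
    · have hσ := card_parts_swap_mul hxy.symm h
      have ht := card_parts_le_card_parts_glue_add_one (orbitSetoid (Set.range (Fin.tail f))) x y
      lia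
    · have hσ := card_parts_swap_mul_of_not_sameCycle h
      rw [glue_of_rel (rel_of_swap_mul_le h (sameCycle_setoid_le_of_mem_factorizations hf))]
      lia

theorem factorizations_eq_empty_of_not_le (h : ¬ SameCycle.setoid σ ≤ s) :
    factorizations k s σ = ∅ :=
  eq_empty_of_forall_notMem fun _ hf ↦ h (sameCycle_setoid_le_of_mem_factorizations hf)

theorem factorizations_eq_empty_of_lt
    (h : k + 2 * #(parts s) < Fintype.card V + #(parts (SameCycle.setoid σ))) :
    factorizations k s σ = ∅ :=
  eq_empty_of_forall_notMem fun _ hf ↦ (card_add_card_parts_le_of_mem_factorizations hf).not_gt h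

end Factorizations

section CountFormula

open Finset Perm
open scoped Nat

theorem sameCycle_setoid_one (V : Type*) : SameCycle.setoid (1 : Perm V) = ⊥ :=
  le_bot_iff.1 (sameCycle_setoid_le_iff.2 fun _ ↦ rfl)

variable {V : Type*} [Fintype V] [DecidableEq V] {k : ℕ} {r s : Setoid V} {σ : Perm V} {x y : V}
  {B : Finset V}

/-- The claim that `weight` counts the minimal factorizations into `k` transpositions of
permutations of `V`; minimality is the equality case of
`card_add_card_parts_le_of_mem_factorizations`. -/
def CountFormula (V : Type*) [Fintype V] [DecidableEq V] (k : ℕ) : Prop :=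
  ∀ (s : Setoid V) (σ : Perm V), SameCycle.setoid σ ≤ s →
    k + 2 * #(parts s) = Fintype.card V + #(parts (SameCycle.setoid σ)) →
      (#(factorizations k s σ) : ℚ) = k ! * weight s (SameCycle.setoid σ)

theorem countFormula_zero : CountFormula V 0 := fun s σ hle hcard ↦ by
  have hsr := Finpartition.card_mono (classPartition_mono hle)
  have hr := (classPartition (SameCycle.setoid σ)).card_parts_le_card
  rw [card_univ] at hr
  obtain rfl : s = ⊥ := eq_bot_of_card_parts (by lia)
  obtain rfl : σ = 1 := Perm.ext fun u ↦ (sameCycle_setoid_le_iff.1 hle u).symm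
  rw [sameCycle_setoid_one V, weight_bot, factorizations_zero]
  simp

theorem pairCount_eq_zero (hxy : x ≠ y) (hs : ¬ s x y) : pairCount k s σ x y = 0 := by
  classical
  rw [pairCount_eq_sum hxy, filter_eq_empty_iff.2, sum_empty]
  rintro t - rfl
  exact hs (glue_rel t x y)

theorem pairCount_of_not_sameCycle (h : ¬ σ.SameCycle x y) (hs : s x y) :
    pairCount k s σ x y = #(factorizations k s (swap x y * σ)) := by
  classical
  rw [pairCount_eq_sum (by rintro rfl; exact h (SameCycle.refl σ x))]
  refine sum_eq_single_of_mem s ((mem_filter_univ _).2 (glue_of_rel hs)) fun t ht hts ↦ ?_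
  rw [card_eq_zero]
  refine factorizations_eq_empty_of_not_le fun hle ↦ hts ?_
  rw [← (mem_filter_univ _).1 ht, glue_of_rel (rel_of_swap_mul_le h hle)]

open scoped Classical in
theorem pairCount_eq_sum_of_sameCycle
    (hcard : k + 1 + 2 * #(parts s) = Fintype.card V + #(parts (SameCycle.setoid σ)))
    (hne : y ≠ x) (h : σ.SameCycle x y) :
    pairCount k s σ x y =
      ∑ t with glue t x y = s ∧ ¬ t x y ∧ SameCycle.setoid (swap x y * σ) ≤ t,
        #(factorizations k t (swap x y * σ)) := by
  rw [pairCount_eq_sum hne.symm]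
  refine (sum_subset (monotone_filter_right _ fun t _ ht ↦ ht.1) fun t ht htn ↦ ?_).symm
  rw [mem_filter_univ] at ht htn
  rw [card_eq_zero]
  by_cases htxy : t x y
  · have hσ := card_parts_swap_mul hne h
    rw [glue_of_rel htxy] at ht
    subst ht
    exact factorizations_eq_empty_of_lt (by lia)
  · exact factorizations_eq_empty_of_not_le fun hσt ↦ htn ⟨ht, htxy, hσt⟩

theorem sum_part_sdiff_part {M : Type*} [AddCommGroup M] (h : r ≤ s) (x : V) (f : V → M) :
    ∑ y ∈ part s x \ part r x, f y =
      ∑ D ∈ (partsIn r (part s x)).erase (part r x), ∑ y ∈ D, f y := by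
  rw [sum_sdiff_eq_sub (part_mono h x),
    sum_erase_eq_sub (mem_partsIn.2 ⟨part_mem_parts r x, part_mono h x⟩),
    sum_eq_sum_partsIn h (part_mem_parts s x)]

namespace CountFormula

section Succ

variable (hk : CountFormula V k)
  (hcard : k + 1 + 2 * #(parts s) = Fintype.card V + #(parts (SameCycle.setoid σ)))

include hk hcard

theorem card_factorizations_of_sameCycle (hne : y ≠ x) (h : σ.SameCycle x y) {t : Setoid V}
    (hs : glue t x y = s) (ht : ¬ t x y) (hσt : SameCycle.setoid (swap x y * σ) ≤ t) :
    (#(factorizations k t (swap x y * σ)) : ℚ) =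
      k ! * weight s (SameCycle.setoid σ) *
        (cycleFactor #(part (SameCycle.setoid (swap x y * σ)) x) *
            cycleFactor #(part (SameCycle.setoid (swap x y * σ)) y) /
            cycleFactor (#(part (SameCycle.setoid (swap x y * σ)) x) +
              #(part (SameCycle.setoid (swap x y * σ)) y)) *
          (blockWeight (SameCycle.setoid (swap x y * σ)) (part t x) *
            blockWeight (SameCycle.setoid (swap x y * σ)) (part t y) /
              blockWeight (SameCycle.setoid σ) (part s x))) := by
  have hσ := card_parts_swap_mul hne h
  have hs' := card_parts_glue ht
  have hr : ¬ SameCycle.setoid (swap x y * σ) x y := not_sameCycle_swap_mul hne h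
  rw [hs] at hs'
  rw [hk t _ hσt (by lia), weight_eq_weight_glue_glue hr ht hσt,
    glue_sameCycle_setoid_swap_mul hne h, hs, mul_assoc]

variable (hle : SameCycle.setoid σ ≤ s)

include hle

theorem pairCount_mul_blockWeight_of_not_sameCycle (h : ¬ σ.SameCycle x y) (hs : s x y) :
    pairCount k s σ x y * blockWeight (SameCycle.setoid σ) (part s x) =
      k ! * weight s (SameCycle.setoid σ) *
        (cycleFactor (#(part (SameCycle.setoid σ) x) + #(part (SameCycle.setoid σ) y)) /
            (cycleFactor #(part (SameCycle.setoid σ) x) *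
              cycleFactor #(part (SameCycle.setoid σ) y)) *
          ((#(part s x) : ℚ) ^ #(partsIn (SameCycle.setoid σ) (part s x)) /
            (#(part s x) : ℚ) ^ 4)) := by
  have hparts := card_parts_swap_mul_of_not_sameCycle h
  have hglue := sameCycle_setoid_swap_mul_of_not_sameCycle h
  rw [pairCount_of_not_sameCycle h hs,
    hk s _ (hglue ▸ glue_le_iff.2 ⟨hle, hs⟩) (by lia), hglue, weight_glue_right h hle hs,
    blockWeight, pow_succ _ 3]
  ring

theorem pairCount_mul_blockWeight_of_sameCycle (hne : y ≠ x) (h : σ.SameCycle x y) :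
    pairCount k s σ x y * blockWeight (SameCycle.setoid σ) (part s x) =
      k ! * weight s (SameCycle.setoid σ) *
        (cycleFactor #(part (SameCycle.setoid (swap x y * σ)) x) *
            cycleFactor (#(part (SameCycle.setoid σ) x) -
              #(part (SameCycle.setoid (swap x y * σ)) x)) /
            cycleFactor #(part (SameCycle.setoid σ) x) *
          hurwitzSum (fun C : Finset V ↦ (#C : ℚ)) 2 2
            ((partsIn (SameCycle.setoid σ) (part s x)).erase (part (SameCycle.setoid σ) x))
            #(part (SameCycle.setoid (swap x y * σ)) x)
            (#(part (SameCycle.setoid σ) x) -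
              #(part (SameCycle.setoid (swap x y * σ)) x) : ℕ)) := by
  classical
  have hr : ¬ SameCycle.setoid (swap x y * σ) x y := not_sameCycle_swap_mul hne h
  have hglue := glue_sameCycle_setoid_swap_mul hne h
  have hC := card_part_glue hr
  have hw := blockWeight_part_ne_zero (SameCycle.setoid σ) s x
  have hsplit := sum_blockWeight_mul_blockWeight hr (hglue.trans_le hle)
  rw [hglue] at hC hsplit
  have hy : #(part (SameCycle.setoid σ) x) - #(part (SameCycle.setoid (swap x y * σ)) x) =
      #(part (SameCycle.setoid (swap x y * σ)) y) := by lia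
  rw [pairCount_eq_sum_of_sameCycle hcard hne h, hy, ← hsplit, Nat.cast_sum, hC,
    mul_sum, sum_mul, mul_sum]
  refine sum_congr rfl fun t ht ↦ ?_
  obtain ⟨hs, ht, hσt⟩ := (mem_filter_univ _).1 ht
  rw [hk.card_factorizations_of_sameCycle hcard hne h hs ht hσt]
  field_simp

theorem sum_pairCount_part_sdiff_mul_blockWeight (x : V) :
    ∑ y ∈ part s x \ part (SameCycle.setoid σ) x,
        pairCount k s σ x y * blockWeight (SameCycle.setoid σ) (part s x) =
      k ! * weight s (SameCycle.setoid σ) *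
        ∑ D ∈ (partsIn (SameCycle.setoid σ) (part s x)).erase (part (SameCycle.setoid σ) x),
          #D * (cycleFactor (#(part (SameCycle.setoid σ) x) + #D) /
              (cycleFactor #(part (SameCycle.setoid σ) x) * cycleFactor #D)) *
            ((#(part s x) : ℚ) ^ #(partsIn (SameCycle.setoid σ) (part s x)) /
              (#(part s x) : ℚ) ^ 4) := by
  rw [sum_part_sdiff_part hle, mul_sum]
  refine sum_congr rfl fun D hD ↦ ?_
  obtain ⟨hDx, hD⟩ := mem_erase.1 hD
  obtain ⟨hD, hDs⟩ := mem_partsIn.1 hD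
  rw [sum_congr rfl fun y hy ↦ hk.pairCount_mul_blockWeight_of_not_sameCycle hcard hle
    (fun h ↦ hDx ((part_eq_of_mem hD hy).symm.trans (part_eq_part_iff.2 h).symm))
    (mem_part.1 (hDs hy))]
  rw [sum_congr rfl fun y hy ↦ by rw [part_eq_of_mem hD hy], sum_const, nsmul_eq_mul]
  ring

theorem sum_pairCount_part_erase_mul_blockWeight (x : V) :
    ∑ y ∈ (part (SameCycle.setoid σ) x).erase x,
        pairCount k s σ x y * blockWeight (SameCycle.setoid σ) (part s x) =
      k ! * weight s (SameCycle.setoid σ) *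
        ∑ b ∈ Ico 1 #(part (SameCycle.setoid σ) x),
          cycleFactor b * cycleFactor (#(part (SameCycle.setoid σ) x) - b) /
              cycleFactor #(part (SameCycle.setoid σ) x) *
            hurwitzSum (fun C : Finset V ↦ (#C : ℚ)) 2 2
              ((partsIn (SameCycle.setoid σ) (part s x)).erase (part (SameCycle.setoid σ) x))
              b (#(part (SameCycle.setoid σ) x) - b : ℕ) := by
  rw [← sum_card_part_swap_mul σ x, mul_sum]
  refine sum_congr rfl fun y hy ↦ ?_
  obtain ⟨hne, hy⟩ := mem_erase.1 hy
  exact hk.pairCount_mul_blockWeight_of_sameCycle hcard hle hne (mem_part.1 hy)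

theorem sum_pairCount_mul_blockWeight (x : V) :
    (∑ y ∈ univ.erase x, (pairCount k s σ x y : ℚ)) *
        blockWeight (SameCycle.setoid σ) (part s x) =
      k ! * weight s (SameCycle.setoid σ) *
        (∑ D ∈ (partsIn (SameCycle.setoid σ) (part s x)).erase (part (SameCycle.setoid σ) x),
          #D * (cycleFactor (#(part (SameCycle.setoid σ) x) + #D) /
              (cycleFactor #(part (SameCycle.setoid σ) x) * cycleFactor #D)) *
            ((#(part s x) : ℚ) ^ #(partsIn (SameCycle.setoid σ) (part s x)) /
              (#(part s x) : ℚ) ^ 4) +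
        ∑ b ∈ Ico 1 #(part (SameCycle.setoid σ) x),
          cycleFactor b * cycleFactor (#(part (SameCycle.setoid σ) x) - b) /
              cycleFactor #(part (SameCycle.setoid σ) x) *
            hurwitzSum (fun C : Finset V ↦ (#C : ℚ)) 2 2
              ((partsIn (SameCycle.setoid σ) (part s x)).erase (part (SameCycle.setoid σ) x))
              b (#(part (SameCycle.setoid σ) x) - b : ℕ)) := by
  have hsub := erase_subset_erase x (subset_univ (part s x))
  have hC := part_mono hle x
  have hsplit : (part s x).erase x =
      part s x \ part (SameCycle.setoid σ) x ∪ (part (SameCycle.setoid σ) x).erase x := by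
    have hx := self_mem_part (SameCycle.setoid σ) x
    grind
  rw [mul_add, ← hk.sum_pairCount_part_sdiff_mul_blockWeight hcard hle,
    ← hk.sum_pairCount_part_erase_mul_blockWeight hcard hle,
    ← sum_union (disjoint_sdiff_self_left.mono_right (erase_subset _ _)), ← hsplit, ← sum_mul,
    sum_subset hsub]
  intro y hy hys
  rw [pairCount_eq_zero (ne_of_mem_erase hy).symm fun h ↦
    hys (mem_erase.2 ⟨ne_of_mem_erase hy, mem_part.2 h⟩), Nat.cast_zero]

theorem sum_sum_pairCount (hB : B ∈ parts s) :
    ∑ x ∈ B, ∑ y ∈ univ.erase x, (pairCount k s σ x y : ℚ) =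
      k ! * weight s (SameCycle.setoid σ) *
        (2 * (#B + #(partsIn (SameCycle.setoid σ) B) - 2)) := by
  have hw : blockWeight (SameCycle.setoid σ) B ≠ 0 := by
    obtain ⟨x, rfl⟩ := mem_parts.1 hB
    exact blockWeight_part_ne_zero _ s x
  have hidentity := sum_cycleFactor_join_add_cut (I := partsIn (SameCycle.setoid σ) B)
    (z := fun C ↦ #C) (fun C hC ↦ card_pos_of_mem_parts (mem_partsIn.1 hC).1)
    (mod_cast sum_card_partsIn hle hB) (Nat.cast_pos.2 (card_pos_of_mem_parts hB))
  refine mul_right_cancel₀ hw ?_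
  rw [mul_assoc, blockWeight, ← hidentity, ← blockWeight, sum_mul, sum_eq_sum_partsIn hle hB,
    ← sum_add_distrib, mul_sum]
  refine sum_congr rfl fun C hC ↦ ?_
  obtain ⟨hC, hCB⟩ := mem_partsIn.1 hC
  calc ∑ x ∈ C, (∑ y ∈ univ.erase x, (pairCount k s σ x y : ℚ)) * blockWeight (SameCycle.setoid σ) B
      = ∑ x ∈ C, k ! * weight s (SameCycle.setoid σ) * _ := sum_congr rfl fun x hx ↦ by
        have hrow := hk.sum_pairCount_mul_blockWeight hcard hle x
        rwa [part_eq_of_mem hB (hCB hx), part_eq_of_mem hC hx] at hrow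
    _ = _ := by
        rw [sum_const, nsmul_eq_mul, mul_left_comm, mul_add, mul_sum]
        simp only [mul_assoc]

theorem card_factorizations_succ :
    (#(factorizations (k + 1) s σ) : ℚ) = (k + 1)! * weight s (SameCycle.setoid σ) := by
  have hclasses : ∑ B ∈ parts s, (#B : ℚ) = Fintype.card V :=
    mod_cast (classPartition s).sum_card_parts
  have hcycles : ∑ B ∈ parts s, (#(partsIn (SameCycle.setoid σ) B) : ℚ) =
      #(parts (SameCycle.setoid σ)) := by
    simpa only [card_eq_sum_ones, Nat.cast_sum] using
      (sum_parts_eq_sum_partsIn hle fun _ ↦ ((1 : ℕ) : ℚ)).symm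
  have hcard' : (k + 1 + 2 * #(parts s) : ℚ) =
      Fintype.card V + #(parts (SameCycle.setoid σ)) := mod_cast hcard
  suffices h : (2 * #(factorizations (k + 1) s σ) : ℚ) =
      2 * ((k + 1)! * weight s (SameCycle.setoid σ)) from mul_left_cancel₀ two_ne_zero h
  calc (2 * #(factorizations (k + 1) s σ) : ℚ)
      = ∑ x, ∑ y ∈ univ.erase x, (pairCount k s σ x y : ℚ) :=
        mod_cast two_mul_card_factorizations_succ k s σ
    _ = ∑ B ∈ parts s, ∑ x ∈ B, ∑ y ∈ univ.erase x, (pairCount k s σ x y : ℚ) := by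
        rw [← (classPartition s).biUnion_parts, sum_biUnion (classPartition s).disjoint]
        rfl
    _ = ∑ B ∈ parts s, k ! * weight s (SameCycle.setoid σ) *
          (2 * (#B + #(partsIn (SameCycle.setoid σ) B) - 2)) :=
        sum_congr rfl fun B hB ↦ hk.sum_sum_pairCount hcard hle hB
    _ = 2 * ((k + 1)! * weight s (SameCycle.setoid σ)) := by
        rw [← mul_sum, ← mul_sum, sum_sub_distrib, sum_add_distrib, hclasses, hcycles, ← hcard',
          sum_const, nsmul_eq_mul, Nat.factorial_succ]
        push_cast
        ring

end Succ

end CountFormula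

theorem countFormula (V : Type*) [Fintype V] [DecidableEq V] (k : ℕ) : CountFormula V k := by
  induction k with
  | zero => exact countFormula_zero
  | succ k ih => exact fun s σ hle hcard ↦ ih.card_factorizations_succ hcard hle

end CountFormula

section CycleType

open Finset Perm
open scoped Nat

variable {V : Type*} [Fintype V] [DecidableEq V] {k : ℕ} {σ : Perm V} {x : V}

theorem part_sameCycle_setoid_eq_support (hx : x ∈ σ.support) :
    part (SameCycle.setoid σ) x = (σ.cycleOf x).support := by
  ext y
  rw [mem_part, mem_support_cycleOf_iff]
  exact (and_iff_left hx).symm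

theorem part_sameCycle_setoid_of_notMem_support (hx : x ∉ σ.support) :
    part (SameCycle.setoid σ) x = {x} := by
  ext y
  rw [mem_part, mem_singleton]
  exact ⟨fun h ↦ (h.eq_of_left (notMem_support.1 hx)).symm, fun h ↦ h ▸ SameCycle.refl σ y⟩

theorem support_mem_parts {c : Perm V} (hc : c ∈ σ.cycleFactorsFinset) :
    c.support ∈ parts (SameCycle.setoid σ) := by
  obtain ⟨x, hx⟩ := (mem_cycleFactorsFinset_iff.1 hc).1.nonempty_support
  rw [cycle_is_cycleOf hx hc,
    ← part_sameCycle_setoid_eq_support (mem_cycleFactorsFinset_support_le hc hx)]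
  exact part_mem_parts _ x

theorem support_injOn_cycleFactorsFinset (σ : Perm V) :
    Set.InjOn support (σ.cycleFactorsFinset : Set (Perm V)) := fun c hc d hd h ↦ by
  obtain ⟨x, hx⟩ := (mem_cycleFactorsFinset_iff.1 hc).1.nonempty_support
  rw [cycle_is_cycleOf hx hc, cycle_is_cycleOf (h ▸ hx) hd]

@[to_additive]
theorem prod_parts_sameCycle_setoid {M : Type*} [CommMonoid M] (σ : Perm V) {f : ℕ → M}
    (hf : f 1 = 1) : ∏ C ∈ parts (SameCycle.setoid σ), f #C = (σ.cycleType.map f).prod := by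
  have hcycles : ∏ C ∈ σ.cycleFactorsFinset.image support, f #C = (σ.cycleType.map f).prod := by
    rw [prod_image (support_injOn_cycleFactorsFinset σ), cycleType_def, Multiset.map_map]
    rfl
  rw [← hcycles]
  refine (prod_subset (image_subset_iff.2 fun c ↦ support_mem_parts) fun C hC hCσ ↦ ?_).symm
  obtain ⟨x, rfl⟩ := mem_parts.1 hC
  by_cases hx : x ∈ σ.support
  · rw [part_sameCycle_setoid_eq_support hx] at hCσ
    exact (hCσ (mem_image_of_mem _ (cycleOf_mem_cycleFactorsFinset_iff.2 hx))).elim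
  · rw [part_sameCycle_setoid_of_notMem_support hx, card_singleton, hf]

theorem card_parts_sameCycle_setoid_add (σ : Perm V) :
    #(parts (SameCycle.setoid σ)) + (σ.cycleType.map (· - 1)).sum = Fintype.card V := by
  rw [← sum_parts_sameCycle_setoid σ (f := (· - 1)) rfl, card_eq_sum_ones, ← sum_add_distrib,
    ← card_univ, ← (classPartition (SameCycle.setoid σ)).sum_card_parts]
  exact sum_congr rfl fun C hC ↦ Nat.add_sub_of_le (card_pos_of_mem_parts hC)

theorem parts_top [Nonempty V] : parts (⊤ : Setoid V) = {univ} := by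
  have hpart (x : V) : part (⊤ : Setoid V) x = univ :=
    eq_univ_of_forall fun _ ↦ mem_part.2 trivial
  ext C
  rw [mem_parts, mem_singleton]
  simp only [hpart, exists_const, eq_comm]

theorem weight_top [Nonempty V] (r : Setoid V) :
    weight ⊤ r = (∏ C ∈ parts r, cycleFactor #C) *
      (Fintype.card V : ℚ) ^ ((#(parts r) : ℤ) - 3) := by
  have hparts : partsIn r univ = parts r := filter_true_of_mem fun _ _ ↦ subset_univ _
  rw [weight, parts_top, prod_singleton, blockWeight, hparts, card_univ,
    zpow_sub₀ (mod_cast Fintype.card_ne_zero), zpow_natCast]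
  rfl

theorem cycleFactor_two : cycleFactor 2 = 4 := by norm_num [cycleFactor, selfMapCoeff]

theorem card_factorizations_top [Nonempty V]
    (hk : k + 2 = Fintype.card V + #(parts (SameCycle.setoid σ))) :
    (#(factorizations k ⊤ σ) : ℚ) = k ! * ((σ.cycleType.map cycleFactor).prod *
      (Fintype.card V : ℚ) ^ ((#(parts (SameCycle.setoid σ)) : ℤ) - 3)) := by
  rw [countFormula V k ⊤ σ le_top (by rwa [parts_top, card_singleton]), weight_top,
    prod_parts_sameCycle_setoid σ cycleFactor_one]

theorem card_factorizations_top_of_cycleType_eq (hσ : σ.cycleType = {2, 2})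
    (hk : k + 4 = 2 * Fintype.card V) :
    (#(factorizations k ⊤ σ) : ℚ) =
      k ! * (16 * (Fintype.card V : ℚ) ^ ((Fintype.card V : ℤ) - 5)) := by
  have hparts : #(parts (SameCycle.setoid σ)) + 2 = Fintype.card V := by
    simpa [hσ] using card_parts_sameCycle_setoid_add σ
  have : Nonempty V := Fintype.card_pos_iff.1 (by lia)
  have hexp : (#(parts (SameCycle.setoid σ)) : ℤ) - 3 = Fintype.card V - 5 := by lia
  have hprod : (σ.cycleType.map cycleFactor).prod = 16 := by
    rw [hσ]
    norm_num [cycleFactor_two]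
  rw [card_factorizations_top (by lia), hexp, hprod]

theorem card_cycleType_two_two_mul (hV : 4 ≤ Fintype.card V) :
    #{σ : Perm V | σ.cycleType = {2, 2}} * ((Fintype.card V - 4)! * 8) = (Fintype.card V)! := by
  have h := card_of_cycleType_mul_eq V {2, 2}
  have hcount : ∏ a ∈ ({2, 2} : Multiset ℕ).toFinset, (({2, 2} : Multiset ℕ).count a)! = 2 := rfl
  rw [if_pos (by simpa using hV), hcount, mul_assoc] at h
  exact h

theorem mem_factorizations_top_inv {f : Fin k → Perm V} :
    f ∈ factorizations k ⊤ σ⁻¹ ↔ (∀ i, (f i).IsSwap) ∧ σ * (List.ofFn f).prod = 1 ∧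
      ∀ x y, ∃ g ∈ Subgroup.closure ({σ} ∪ Set.range f), g x = y := by
  rw [mem_factorizations, mul_eq_one_iff_inv_eq, eq_comm (a := σ⁻¹), ← orbitSetoid_eq_top_iff]
  refine and_congr_right fun _ ↦ and_congr_right fun hprod ↦ ?_
  rw [orbitSetoid_singleton_union]
  exact inv_mem_iff.1 (hprod ▸ prod_ofFn_mem_closure f)

theorem natCard_transitive_eq_sum_card_factorizations (m : Multiset ℕ) :
    Nat.card {p : Perm V × (Fin k → Perm V) // p.1.cycleType = m ∧ (∀ i, (p.2 i).IsSwap) ∧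
      p.1 * (List.ofFn p.2).prod = 1 ∧
      ∀ x y, ∃ g ∈ Subgroup.closure ({p.1} ∪ Set.range p.2), g x = y} =
    ∑ σ : Perm V with σ.cycleType = m, #(factorizations k ⊤ σ⁻¹) := by
  simp only [← mem_factorizations_top_inv]
  rw [Nat.card_eq_fintype_card, Fintype.card_subtype, card_filter, Fintype.sum_prod_type,
    sum_filter]
  refine sum_congr rfl fun σ _ ↦ ?_
  by_cases hσ : σ.cycleType = m
  · simp only [hσ, true_and, if_true, sum_boole, filter_univ_mem, Nat.cast_id]
  · simp only [hσ, false_and, if_false, sum_const_zero]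

end CycleType

end HurwitzFormula

/-- Genus-zero Hurwitz number h_{1^2}: one branch point of cycle type (2,2,1^{n-4}) and 2n-4 transpositions; h_{1^2} = 2 * ((2n-4)!/(n-4)!) * n^(n-5). -/
theorem hurwitz_number_1_2 (n : ℕ) (hn : 4 ≤ n) :
    (Nat.card {p : Perm (Fin n) × (Fin (2 * n - 4) → Perm (Fin n)) //
        p.1.cycleType = {2, 2} ∧
        (∀ i, (p.2 i).IsSwap) ∧
        p.1 * (List.ofFn p.2).prod = 1 ∧
        (∀ x y : Fin n, ∃ g ∈ Subgroup.closure ({p.1} ∪ Set.range p.2),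
          g x = y)} : ℚ) =
      (n.factorial : ℚ) * (2) *
        (((2 * n - 4).factorial : ℚ) / ((n - 4).factorial : ℚ)) *
        (n : ℚ) ^ ((n : ℤ) - 5) := by
  have hcount (σ : Perm (Fin n)) (hσ : σ.cycleType = {2, 2}) :
      (Finset.card (HurwitzFormula.factorizations (2 * n - 4) ⊤ σ⁻¹) : ℚ) =
        (2 * n - 4).factorial * (16 * (n : ℚ) ^ ((n : ℤ) - 5)) := by
    rw [HurwitzFormula.card_factorizations_top_of_cycleType_eq ((Perm.cycleType_inv σ).trans hσ)
      (by rw [Fintype.card_fin]; lia), Fintype.card_fin]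
  have hperms := HurwitzFormula.card_cycleType_two_two_mul (V := Fin n) (by rwa [Fintype.card_fin])
  rw [Fintype.card_fin] at hperms
  have hn₀ : ((n - 4).factorial : ℚ) ≠ 0 := mod_cast (n - 4).factorial_ne_zero
  rw [HurwitzFormula.natCard_transitive_eq_sum_card_factorizations, Nat.cast_sum,
    Finset.sum_congr rfl fun σ hσ ↦ hcount σ (Finset.mem_filter.1 hσ).2, Finset.sum_const,
    nsmul_eq_mul, ← hperms]
  push_cast
  field_simp
  ring
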